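/- arXiv:0911.2884 — 2 statements merged into one kernel-verified Lean document; each statement's English description precedes it below -/
import Mathlib

section
/- Let I = (L(u,v)) ⊂ S = K[x_1,…,x_n] be a lexsegment edge ideal determined by u = x_1 x_i with 3 ≤ i ≤ n and v = x_2 x_k with 3 ≤ k ≤ n, where u >_lex v and v >_lex x_{i-1}x_n. Then depth(S/I) = 2 if k ≥ i, and depth(S/I) = i + 1 − k if i > k. -/
/-!
The ideal is the edge ideal of two stars: `x_1` is joined to every vertex of `A = {i, …, n}` and
`x_2` to every vertex of `B = {3, …, k}`. The depth turns out to be the dimension of the component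
of `Spec S/I` cut out by the variables of `A ∪ B`, that is, the number of vertices outside `A ∪ B`:
`x_1`, `x_2`, and the isolated vertices `x_{k+1}, …, x_{i-1}` when `k < i`.

*Upper bound.* The prime `P = (x_j : j ∈ A ∪ B)` is the annihilator of `x_1 x_2` in `S/I`, so it is
associated to `S/I`. If `x` lies in the maximal ideal of a Noetherian local ring, is regular on a
finite module `M`, and `P ∈ Ass M`, then some `Q ∈ Ass (M/xM)` strictly contains `P`
(`exists_associatedPrime_gt`). After localizing at `(x_1, …, x_n)`, a regular sequence of length `r`
thus gives a chain of `r` strict inclusions of primes above `P`, so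
`height P + r ≤ dim S = n` (`height_add_length_le_of_isPrime`), while `height P ≥ |A ∪ B|`.

*Lower bound.* Let `c`, `d` be the two centres (in either order), with leaf sets `A`, `B`. The
isolated variables followed by `x_d + x_p` and `x_c + x_q`, for `p ∈ B \ A` and `q ∈ A`, form a
regular sequence as soon as `q ∉ B` or `A ⊆ B` (`isWeaklyRegular_twoStarI`). Regularity is tested
along `0 → S/(I : x_d) → S/I → S/(I, x_d) → 0`; both outer ideals are generated by variables and the
edges of a single star, hence are intersections of two primes generated by variables
(`mem_starI`), and regularity there means avoiding these two primes. For `i ≥ 4` one takes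
`x_2 + x_3` and `x_1 + x_n`; for `i = 3` the hypothesis on `v` forces `k < n`, and the stars change
roles: `x_1 + x_n` and `x_2 + x_3`.
-/


open MvPolynomial

/-- The variable `x_i` (1-based indexing) of `K[x_1,…,x_n]`. -/
noncomputable def xv (K : Type) [Field K] (n i : ℕ) : MvPolynomial (Fin n) K :=
  if h : i - 1 < n then MvPolynomial.X ⟨i - 1, h⟩ else 0

/-- `lexGE p q` : for sorted index pairs, the squarefree degree-2 monomial
`x_{p.1} x_{p.2}` is greater than or equal to `x_{q.1} x_{q.2}` in the
lexicographic order induced by `x_1 > x_2 > ⋯ > x_n`. -/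
def lexGE (p q : ℕ × ℕ) : Prop := p.1 < q.1 ∨ (p.1 = q.1 ∧ p.2 ≤ q.2)

/-- Strict lexicographic comparison of sorted index pairs. -/
def lexGT (p q : ℕ × ℕ) : Prop := p.1 < q.1 ∨ (p.1 = q.1 ∧ p.2 < q.2)

/-- Sorted index pairs in range `1,…,n`; these correspond exactly to the
squarefree monomials of degree 2 of `K[x_1,…,x_n]`. -/
def validPair (n : ℕ) (p : ℕ × ℕ) : Prop := 1 ≤ p.1 ∧ p.1 < p.2 ∧ p.2 ≤ n

/-- The lexsegment set `L(u,v)`, as a set of sorted index pairs. -/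
def lexSegSet (n : ℕ) (u v : ℕ × ℕ) : Set (ℕ × ℕ) :=
  {w | validPair n w ∧ lexGE u w ∧ lexGE w v}

/-- The lexsegment edge ideal `I = (L(u,v)) ⊆ K[x_1,…,x_n]`. -/
noncomputable def lexSegIdeal (K : Type) [Field K] (n : ℕ) (u v : ℕ × ℕ) :
    Ideal (MvPolynomial (Fin n) K) :=
  Ideal.span ((fun w : ℕ × ℕ => xv K n w.1 * xv K n w.2) '' lexSegSet n u v)

/-- The Alexander dual of the lexsegment edge ideal `(L(u,v))`: the intersection,
over the (minimal) monomial generators `x_p x_q` with `(p,q) ∈ L(u,v)`, of the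
prime ideals `(x_p, x_q)`. -/
noncomputable def lexSegAlexDual (K : Type) [Field K] (n : ℕ) (u v : ℕ × ℕ) :
    Ideal (MvPolynomial (Fin n) K) :=
  ⨅ w ∈ lexSegSet n u v, Ideal.span {xv K n w.1, xv K n w.2}

/-- The arithmetical rank of an ideal: the least `r` such that some `r` elements
of `J` generate an ideal with the same radical as `J`. -/
noncomputable def ara {R : Type} [CommRing R] (J : Ideal R) : ℕ :=
  sInf {r : ℕ | ∃ f : Fin r → R, (∀ t, f t ∈ J) ∧
    (Ideal.span (Set.range f)).radical = J.radical}

/-- The projective dimension of a module `M`: the least `d` admitting a projective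
resolution vanishing in homological degrees `> d`. -/
noncomputable def projDim {R : Type} [CommRing R] (M : ModuleCat R) : ℕ :=
  sInf {d : ℕ | ∃ P : CategoryTheory.ProjectiveResolution M,
    ∀ i : ℕ, d < i → CategoryTheory.Limits.IsZero (P.complex.X i)}

/-- The depth of `S/I` with respect to the graded maximal ideal `(x_1,…,x_n)`:
the longest length of a regular sequence on `S/I` consisting of elements of
`(x_1,…,x_n)`. -/
noncomputable def smDepth (K : Type) [Field K] (n : ℕ)
    (I : Ideal (MvPolynomial (Fin n) K)) : ℕ :=
  sSup {r : ℕ | ∃ rs : List (MvPolynomial (Fin n) K), rs.length = r ∧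
    (∀ a ∈ rs, a ∈ Ideal.span
      (Set.range (MvPolynomial.X : Fin n → MvPolynomial (Fin n) K))) ∧
    RingTheory.Sequence.IsRegular (MvPolynomial (Fin n) K ⧸ I) rs}

/-- The height of an ideal: the infimum of the heights of the primes containing it. -/
noncomputable def idealHeight {R : Type} [CommRing R] (I : Ideal R) : ℕ∞ :=
  ⨅ p ∈ {p : PrimeSpectrum R | I ≤ p.asIdeal}, Order.height p

/-- `m` is a monomial of `K[x_1,…,x_n]`. -/
def IsMonomial {K : Type} [Field K] {n : ℕ} (m : MvPolynomial (Fin n) K) : Prop :=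
  ∃ s : Fin n →₀ ℕ, m = MvPolynomial.monomial s 1

/-- `m` is a squarefree monomial of `K[x_1,…,x_n]`. -/
def IsSqFreeMonomial {K : Type} [Field K] {n : ℕ} (m : MvPolynomial (Fin n) K) : Prop :=
  ∃ t : Finset (Fin n), m = t.prod (fun i => MvPolynomial.X i)

/-- `m` is a minimal monomial generator of the monomial ideal `I`: a monomial of `I`
divisible by no monomial of `I` other than itself. -/
def IsMinimalMonomialGen {K : Type} [Field K] {n : ℕ}
    (I : Ideal (MvPolynomial (Fin n) K)) (m : MvPolynomial (Fin n) K) : Prop :=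
  IsMonomial m ∧ m ∈ I ∧
    ∀ m', IsMonomial m' → m' ∈ I → m' ∣ m → m' = m

open scoped Pointwise

/-! ### Associated primes and the length of regular sequences -/


/-- Dividing by a regular element of the maximal ideal strictly enlarges an associated prime: if `N`
is the submodule of `M` killed by `P`, then `N / xN` embeds into `M / xM`, is nonzero by Nakayama,
and is killed by both `P` and `x ∉ P`. -/
lemma exists_associatedPrime_gt {A M : Type*} [CommRing A] [IsLocalRing A] [IsNoetherianRing A]
    [AddCommGroup M] [Module A M] [Module.Finite A M] {P : Ideal A}
    (hP : P ∈ associatedPrimes A M) {x : A} (hx : x ∈ IsLocalRing.maximalIdeal A)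
    (hreg : IsSMulRegular M x) :
    ∃ Q ∈ associatedPrimes A (QuotSMulTop x M), P < Q := by
  rw [AssociatedPrimes.mem_iff, isAssociatedPrime_iff] at hP
  obtain ⟨hPp, w, hw⟩ := hP
  have hmem : ∀ p, p ∈ P ↔ p • w = 0 := fun p => by
    rw [hw, Submodule.mem_colon_singleton, Submodule.mem_bot]
  have hw0 : w ≠ 0 := by
    rintro rfl
    exact hPp.ne_top ((Ideal.eq_top_iff_one _).2 ((hmem 1).2 (smul_zero _)))
  have hxP : x ∉ P := fun h => hw0 (hreg (by simpa using (hmem x).1 h))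
  set N : Submodule A M := Submodule.torsionBySet A M P with hN
  have hNmem : ∀ m, m ∈ N ↔ ∀ p ∈ P, p • m = 0 := fun m => by
    rw [hN, Submodule.mem_torsionBySet_iff]
    exact ⟨fun h p hp => h ⟨p, hp⟩, fun h p => h p p.2⟩
  -- If `N ⊆ xM`, then `N = xN` since `x` is regular, contradicting Nakayama.
  have hex : ∃ n ∈ N, n ∉ x • (⊤ : Submodule A M) := by
    by_contra! hcon
    have hle : N ≤ Ideal.span {x} • N := by
      intro n hn
      obtain ⟨m, -, rfl⟩ := (Submodule.mem_smul_pointwise_iff_exists _ _ _).1 (hcon n hn)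
      refine Submodule.smul_mem_smul (Ideal.mem_span_singleton_self x) ((hNmem m).2 fun p hp => ?_)
      refine hreg ?_
      simp only [smul_zero]
      rw [smul_comm]
      exact (hNmem _).1 hn p hp
    have hbot := Submodule.eq_bot_of_le_smul_of_le_jacobson_bot (Ideal.span {x}) N
      (IsNoetherian.noetherian N) hle
      (((Ideal.span_singleton_le_iff_mem _).2 hx).trans (IsLocalRing.maximalIdeal_le_jacobson _))
    have hwN : w ∈ N := (hNmem w).2 fun p hp => (hmem p).1 hp
    rw [hbot] at hwN
    exact hw0 hwN
  obtain ⟨n, hnN, hn⟩ := hex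
  have hn0 : (Submodule.Quotient.mk n : QuotSMulTop x M) ≠ 0 := fun h =>
    hn ((Submodule.Quotient.mk_eq_zero _).1 h)
  obtain ⟨Q, hQ, hle⟩ := exists_le_isAssociatedPrime_of_isNoetherianRing A _ hn0
  refine ⟨Q, hQ, lt_of_le_of_ne (fun p hp => hle ?_) ?_⟩
  · rw [Submodule.mem_colon_singleton, Submodule.mem_bot, ← Submodule.Quotient.mk_smul,
      (hNmem n).1 hnN p hp, Submodule.Quotient.mk_zero]
  · rintro rfl
    refine hxP (hle ?_)
    rw [Submodule.mem_colon_singleton, Submodule.mem_bot, ← Submodule.Quotient.mk_smul,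
      Submodule.Quotient.mk_eq_zero]
    exact Submodule.smul_mem_pointwise_smul _ _ _ trivial

open RingTheory.Sequence in
lemma height_add_length_le {A : Type*} [CommRing A] [IsLocalRing A] [IsNoetherianRing A]
    (rs : List A) : ∀ {M : Type _} [AddCommGroup M] [Module A M] [Module.Finite A M] {P : Ideal A},
    P ∈ associatedPrimes A M → (∀ r ∈ rs, r ∈ IsLocalRing.maximalIdeal A) →
    IsWeaklyRegular M rs → ((P.height + rs.length : ℕ∞) : WithBot ℕ∞) ≤ ringKrullDim A := by
  induction rs with
  | nil =>
    intro M _ _ _ P hP _ _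
    have := hP.isPrime
    simpa using Ideal.height_le_ringKrullDim_of_isPrime (I := P)
  | cons r rs ih =>
    intro M _ _ _ P hP hm hreg
    rw [isWeaklyRegular_cons_iff] at hreg
    obtain ⟨Q, hQ, hlt⟩ := exists_associatedPrime_gt hP (hm r (by simp)) hreg.1
    have := ih hQ (fun s hs => hm s (by simp [hs])) hreg.2
    refine le_trans (WithBot.coe_le_coe.2 ?_) this
    have h1 := hP.isPrime
    have h2 := hQ.isPrime
    have := Ideal.height_add_one_le_of_lt_of_isPrime hlt
    rw [List.length_cons, Nat.cast_add, Nat.cast_one, add_comm (rs.length : ℕ∞) 1, ← add_assoc]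
    gcongr

open RingTheory.Sequence in
/-- The dimension bound for a sequence inside a prime `m` of a Noetherian ring that is not
necessarily local, by localization at `m`. -/
lemma height_add_length_le_of_isPrime {R M : Type*} [CommRing R] [IsNoetherianRing R]
    [AddCommGroup M] [Module R M] [Module.Finite R M] {P : Ideal R}
    (hP : P ∈ associatedPrimes R M) (m : Ideal R) [m.IsPrime] (hPm : P ≤ m) (rs : List R)
    (hm : ∀ r ∈ rs, r ∈ m) (hreg : IsWeaklyRegular M rs) :
    ((P.height + rs.length : ℕ∞) : WithBot ℕ∞) ≤ ringKrullDim R := by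
  have hPp := hP.isPrime
  have hdisj : Disjoint (m.primeCompl : Set R) (P : Set R) :=
    Set.disjoint_left.2 fun a ha haP => ha (hPm haP)
  let A := Localization.AtPrime m
  have hreg' := hreg.of_isLocalizedModule A m.primeCompl
    (LocalizedModule.mkLinearMap m.primeCompl M)
  have hP' : P.map (algebraMap R A) ∈ associatedPrimes A (LocalizedModule.AtPrime m M) := by
    refine Module.associatedPrimes.mem_associatedPrimes_of_comap_mem_associatedPrimes_of_isLocalizedModule
      m.primeCompl (LocalizedModule.mkLinearMap m.primeCompl M) _ ?_
    have := IsLocalization.under_map_of_isPrime_disjoint m.primeCompl A hPp hdisj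
    rw [Ideal.under] at this
    rwa [this]
  have key := height_add_length_le (A := A) (rs.map (algebraMap R A)) hP' (by
    intro r hr
    obtain ⟨s, hs, rfl⟩ := List.mem_map.1 hr
    exact (IsLocalization.AtPrime.to_map_mem_maximal_iff A m s).2 (hm s hs)) hreg'
  rw [IsLocalization.height_map_of_disjoint m.primeCompl P hdisj, List.length_map,
    IsLocalization.AtPrime.ringKrullDim_eq_height m A] at key
  exact key.trans Ideal.height_le_ringKrullDim_of_isPrime


/-! ### Nonzerodivisors modulo an ideal -/

/-- `f` is a nonzerodivisor on `R ⧸ I`, phrased inside `R` (the case `I = ⊤` is allowed). -/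
def NZMod {R : Type*} [CommRing R] (I : Ideal R) (f : R) : Prop := ∀ a, f * a ∈ I → a ∈ I

section NZMod
variable {R : Type*} [CommRing R]

/-- If `f` is a nonzerodivisor modulo `J₁ = (I, x)` and modulo `J₂ = (I : x)`, then it is one
modulo `I`. -/
lemma NZMod.of_colon {I J₁ J₂ : Ideal R} {x f : R} (h₁ : J₁ = I ⊔ Ideal.span {x})
    (h₂ : ∀ a, x * a ∈ I ↔ a ∈ J₂) (hf₁ : NZMod J₁ f) (hf₂ : NZMod J₂ f) : NZMod I f := by
  intro a ha
  have ha₁ : a ∈ I ⊔ Ideal.span {x} := h₁ ▸ hf₁ a (h₁ ▸ Ideal.mem_sup_left ha)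
  obtain ⟨p, hp, y, hy, rfl⟩ := Submodule.mem_sup.1 ha₁
  obtain ⟨b, rfl⟩ := Ideal.mem_span_singleton'.1 hy
  have hb : x * (f * b) ∈ I := by
    have := I.sub_mem ha (I.mul_mem_left f hp)
    convert this using 1; ring
  have := (h₂ b).2 (hf₂ b ((h₂ _).1 hb))
  rw [mul_comm b]
  exact I.add_mem hp this

/-- The second step of a regular sequence along `0 → R/J₂ → R/I → R/J₁ → 0`, where `J₁ = (I, x)` and
`J₂ = (I : x)`: as `f` is a nonzerodivisor modulo `J₁`, the sequence stays exact after reduction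
modulo `f`. -/
lemma NZMod.sup_of_colon {I J₁ J₂ : Ideal R} {x f g : R} (h₁ : J₁ = I ⊔ Ideal.span {x})
    (h₂ : ∀ a, x * a ∈ I ↔ a ∈ J₂) (hf₁ : NZMod J₁ f) (hg₁ : NZMod (J₁ ⊔ Ideal.span {f}) g)
    (hg₂ : NZMod (J₂ ⊔ Ideal.span {f}) g) : NZMod (I ⊔ Ideal.span {f}) g := by
  intro a ha
  have hle : I ⊔ Ideal.span {f} ≤ J₁ ⊔ Ideal.span {f} := by
    rw [h₁]; exact sup_le_sup_right le_sup_left _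
  have hxf : ∀ b ∈ J₂ ⊔ Ideal.span {f}, x * b ∈ I ⊔ Ideal.span {f} := by
    intro b hb
    obtain ⟨j, hj, y, hy, rfl⟩ := Submodule.mem_sup.1 hb
    rw [mul_add]
    exact Ideal.add_mem _ (Ideal.mem_sup_left ((h₂ j).2 hj))
      (Ideal.mem_sup_right (Ideal.mul_mem_left _ _ hy))
  -- `a` is `p + c * x` up to a multiple of `f`, with `p ∈ I`; only `c * x` matters.
  have ha₁ := hg₁ a (hle ha)
  obtain ⟨j, hj, y, hy, rfl⟩ := Submodule.mem_sup.1 ha₁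
  rw [h₁] at hj
  obtain ⟨p, hp, z, hz, rfl⟩ := Submodule.mem_sup.1 hj
  obtain ⟨c, rfl⟩ := Ideal.mem_span_singleton'.1 hz
  suffices x * c ∈ I ⊔ Ideal.span {f} by
    rw [mul_comm c]
    exact Ideal.add_mem _ (Ideal.add_mem _ (Ideal.mem_sup_left hp) this) (Ideal.mem_sup_right hy)
  have hgxc : g * (x * c) ∈ I ⊔ Ideal.span {f} := by
    have := Ideal.sub_mem _ ha (Ideal.mul_mem_left _ g
      (Ideal.add_mem _ (Ideal.mem_sup_left hp) (Ideal.mem_sup_right hy)))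
    convert this using 1; ring
  obtain ⟨p', hp', w, hw, hpw⟩ := Submodule.mem_sup.1 hgxc
  obtain ⟨b, rfl⟩ := Ideal.mem_span_singleton'.1 hw
  have hb : b ∈ I ⊔ Ideal.span {x} := by
    rw [← h₁]
    refine hf₁ b ?_
    rw [h₁]
    have : f * b = x * (g * c) - p' := by linear_combination hpw
    rw [this]
    exact Ideal.sub_mem _ (Ideal.mem_sup_right
      (Ideal.mul_mem_right _ _ (Ideal.mem_span_singleton_self x))) (Ideal.mem_sup_left hp')
  obtain ⟨p₂, hp₂, v, hv, rfl⟩ := Submodule.mem_sup.1 hb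
  obtain ⟨e, rfl⟩ := Ideal.mem_span_singleton'.1 hv
  have hge : g * c - f * e ∈ J₂ := by
    rw [← h₂]
    have : x * (g * c - f * e) = p' + f * p₂ := by linear_combination -hpw
    rw [this]
    exact I.add_mem hp' (I.mul_mem_left _ hp₂)
  refine hxf c (hg₂ c ?_)
  have := Ideal.add_mem _ (Ideal.mem_sup_left hge) (Ideal.mem_sup_right
    (Ideal.mul_mem_right e _ (Ideal.mem_span_singleton_self f)) : f * e ∈ J₂ ⊔ Ideal.span {f})
  convert this using 1; ring

open RingTheory.Sequence in
lemma isWeaklyRegular_quotient_cons {I : Ideal R} {r : R} {rs : List R} (hr : NZMod I r)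
    (hrs : IsWeaklyRegular (R ⧸ (I ⊔ Ideal.span {r})) rs) :
    IsWeaklyRegular (R ⧸ I) (r :: rs) := by
  rw [isWeaklyRegular_cons_iff]
  constructor
  · rw [isSMulRegular_iff_right_eq_zero_of_smul]
    intro x hx
    obtain ⟨a, rfl⟩ := Ideal.Quotient.mk_surjective x
    rw [Ideal.Quotient.eq_zero_iff_mem]
    exact hr a (Ideal.Quotient.eq_zero_iff_mem.1 hx)
  · have hmap : r • (⊤ : Submodule R (R ⧸ I)) = Submodule.map I.mkQ (Ideal.span {r}) := by
      rw [← Submodule.ideal_span_singleton_smul, ← Submodule.range_mkQ I, ← Submodule.map_top,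
        ← Submodule.map_smul'', smul_eq_mul, Ideal.mul_top]
    exact (((Submodule.quotEquivOfEq _ _ hmap).trans
      (Submodule.quotientQuotientEquivQuotientSup I (Ideal.span {r}))).isWeaklyRegular_congr
        rs).2 hrs

open RingTheory.Sequence in
lemma isRegular_quotient_of_le {I m : Ideal R} (hm : m ≠ ⊤) (hI : I ≤ m) {rs : List R}
    (hrs : ∀ r ∈ rs, r ∈ m) (h : IsWeaklyRegular (R ⧸ I) rs) : IsRegular (R ⧸ I) rs := by
  refine ⟨h, fun htop => hm ((Ideal.eq_top_iff_one _).2 ?_)⟩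
  have hle : Ideal.ofList rs • (⊤ : Submodule R (R ⧸ I)) ≤ Submodule.map I.mkQ m := by
    refine Submodule.smul_le.2 fun r hr x _ => ?_
    obtain ⟨a, rfl⟩ := Submodule.mkQ_surjective I x
    rw [← map_smul]
    exact Submodule.mem_map_of_mem (m.mul_mem_right _ (Ideal.span_le.2 hrs hr))
  obtain ⟨y, hy, hy1⟩ : I.mkQ 1 ∈ Submodule.map I.mkQ m := hle (htop ▸ trivial)
  have : y - 1 ∈ I := (Submodule.Quotient.eq I).1 hy1
  have := m.sub_mem hy (hI this)
  simpa using this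

end NZMod

/-! ### Ideals generated by variables -/

section Variables
variable {σ K : Type*} [Field K]

variable (K) in
/-- The ideal generated by the variables indexed by `V`. -/
noncomputable def varI (V : Set σ) : Ideal (MvPolynomial σ K) := Ideal.span (X '' V)

lemma X_mem_varI {V : Set σ} {j : σ} (h : j ∈ V) : X j ∈ varI K V :=
  Ideal.subset_span ⟨j, h, rfl⟩

lemma varI_mono {V W : Set σ} (h : V ⊆ W) : varI K V ≤ varI K W :=
  Ideal.span_mono (Set.image_mono h)

lemma varI_insert (V : Set σ) (t : σ) : varI K (insert t V) = varI K V ⊔ Ideal.span {X t} := by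
  rw [varI, varI, Set.image_insert_eq, Ideal.span_insert, sup_comm]

open Classical in
/-- The ideal of a set of variables is the kernel of the substitution sending them to zero; hence it
is prime. -/
lemma varI_eq_ker (V : Set σ) :
    varI K V = RingHom.ker
      (aeval (fun j => if j ∈ V then 0 else X j) : MvPolynomial σ K →ₐ[K] MvPolynomial σ K) := by
  set φ : MvPolynomial σ K →ₐ[K] MvPolynomial σ K := aeval (fun j => if j ∈ V then 0 else X j)
  apply le_antisymm
  · refine Ideal.span_le.2 ?_
    rintro _ ⟨j, hj, rfl⟩
    simp [φ, RingHom.mem_ker, hj]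
  · intro a ha
    have key : (Ideal.Quotient.mkₐ K (varI K V)).comp φ = Ideal.Quotient.mkₐ K (varI K V) := by
      ext j
      by_cases hj : j ∈ V
      · have : Ideal.Quotient.mk (varI K V) (X j) = 0 :=
          Ideal.Quotient.eq_zero_iff_mem.2 (X_mem_varI hj)
        simp [φ, hj, this]
      · simp [φ, hj]
    have h0 : φ a = 0 := ha
    have := DFunLike.congr_fun key a
    rw [AlgHom.comp_apply, h0, map_zero] at this
    exact Ideal.Quotient.eq_zero_iff_mem.1 this.symm

instance varI_isPrime (V : Set σ) : (varI K V).IsPrime := by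
  rw [varI_eq_ker]; exact RingHom.ker_isPrime _

lemma X_add_X_notMem {V : Set σ} {a b : σ} (ha : a ∉ V) (hab : a ≠ b) :
    (X a + X b : MvPolynomial σ K) ∉ varI K V := by
  classical
  intro h
  have hle : varI K V ≤ RingHom.ker (eval (Pi.single a (1 : K))) := by
    refine Ideal.span_le.2 ?_
    rintro _ ⟨j, hj, rfl⟩
    have : j ≠ a := fun h => ha (h ▸ hj)
    simp [RingHom.mem_ker, this]
  have := hle h
  simp [RingHom.mem_ker, hab.symm] at this

lemma X_mem_varI_iff {V : Set σ} {a : σ} : (X a : MvPolynomial σ K) ∈ varI K V ↔ a ∈ V := by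
  refine ⟨fun h => ?_, X_mem_varI⟩
  classical
  by_contra ha
  rw [varI_eq_ker] at h
  simp [RingHom.mem_ker, ha] at h

lemma card_le_height_varI (s : Finset σ) : (s.card : ℕ∞) ≤ (varI K (s : Set σ)).height := by
  classical
  induction s using Finset.induction_on with
  | empty => simp
  | insert a s ha ih =>
    have hlt : varI K (s : Set σ) < varI K ((insert a s : Finset σ) : Set σ) := by
      refine lt_of_le_of_ne (varI_mono (by simp)) fun h => ha ?_
      have : (X a : MvPolynomial σ K) ∈ varI K (s : Set σ) := h ▸ X_mem_varI (by simp)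
      simpa using X_mem_varI_iff.1 this
    have := Ideal.height_add_one_le_of_lt_of_isPrime hlt
    rw [Finset.card_insert_of_notMem ha, Nat.cast_add, Nat.cast_one]
    exact le_trans (by gcongr) this

/-! ### One star: variables `V` and the edges from `c` to `W` -/

variable (K) in
/-- The ideal generated by the variables in `V` and the edges `x_c x_j`, `j ∈ W`, of a star centred
at `c`. The sets `V` and `W` may overlap. -/
noncomputable def starI (V : Set σ) (c : σ) (W : Set σ) : Ideal (MvPolynomial σ K) :=
  varI K V ⊔ Ideal.span ((fun j => X c * X j) '' W)

/-- The star ideal is the intersection of the primes `(V, x_c)` and `(V, W)`. -/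
lemma mem_starI {V W : Set σ} {c : σ} (hcV : c ∉ V) (hcW : c ∉ W) {a : MvPolynomial σ K} :
    a ∈ starI K V c W ↔ a ∈ varI K (insert c V) ∧ a ∈ varI K (V ∪ W) := by
  constructor
  · intro h
    constructor
    · refine (sup_le (varI_mono (Set.subset_insert _ _)) (Ideal.span_le.2 ?_) : starI K V c W ≤ _) h
      rintro _ ⟨j, -, rfl⟩
      exact Ideal.mul_mem_right _ _ (X_mem_varI (by simp))
    · refine (sup_le (varI_mono Set.subset_union_left) (Ideal.span_le.2 ?_) : starI K V c W ≤ _) h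
      rintro _ ⟨j, hj, rfl⟩
      exact Ideal.mul_mem_left _ _ (X_mem_varI (by simp [hj]))
  · rintro ⟨h₁, h₂⟩
    rw [varI_insert] at h₁
    obtain ⟨v, hv, y, hy, rfl⟩ := Submodule.mem_sup.1 h₁
    obtain ⟨b, rfl⟩ := Ideal.mem_span_singleton'.1 hy
    have hcb : b * X c ∈ varI K (V ∪ W) := by
      simpa using Ideal.sub_mem _ h₂ (varI_mono (K := K) (Set.subset_union_left (t := W)) hv)
    have hb : b ∈ varI K (V ∪ W) := by
      refine ((varI_isPrime _).mem_or_mem hcb).resolve_right fun h => ?_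
      rcases X_mem_varI_iff.1 h with h | h
      exacts [hcV h, hcW h]
    refine Ideal.add_mem _ (Ideal.mem_sup_left hv) ?_
    rw [varI, Set.image_union, Ideal.span_union] at hb
    obtain ⟨v', hv', w, hw, rfl⟩ := Submodule.mem_sup.1 hb
    rw [add_mul]
    refine Ideal.add_mem _ (Ideal.mem_sup_left (Ideal.mul_mem_right _ _ hv'))
      (Ideal.mem_sup_right ?_)
    have hle : Ideal.span (X '' W) ≤ Submodule.comap (LinearMap.mulLeft (MvPolynomial σ K) (X c))
        (Ideal.span ((fun j => X c * X j) '' W) : Ideal (MvPolynomial σ K)) := by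
      refine Ideal.span_le.2 ?_
      rintro _ ⟨j, hj, rfl⟩
      exact Ideal.subset_span ⟨j, hj, rfl⟩
    rw [mul_comm]
    exact hle hw

lemma starI_of_subset {V W : Set σ} {c : σ} (h : W ⊆ V) : starI K V c W = varI K V := by
  refine sup_eq_left.2 (Ideal.span_le.2 ?_)
  rintro _ ⟨j, hj, rfl⟩
  exact Ideal.mul_mem_left _ _ (X_mem_varI (h hj))

lemma nzMod_of_isPrime {R : Type*} [CommRing R] {P : Ideal R} (hP : P.IsPrime) {f : R}
    (hf : f ∉ P) : NZMod P f :=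
  fun _ ha => (hP.mem_or_mem ha).resolve_left hf

/-- A nonzerodivisor modulo a star ideal only has to avoid its primes `(V, x_c)` and `(V, W)`; the
first one is redundant when `W ⊆ V`. -/
lemma nzMod_starI {V W : Set σ} {c : σ} (hcV : c ∉ V) (hcW : c ∉ W) {f : MvPolynomial σ K}
    (hf₁ : W ⊆ V ∨ f ∉ varI K (insert c V)) (hf₂ : f ∉ varI K (V ∪ W)) :
    NZMod (starI K V c W) f := by
  by_cases hWV : W ⊆ V
  · rw [starI_of_subset hWV]
    exact nzMod_of_isPrime inferInstance (Set.union_eq_self_of_subset_right hWV ▸ hf₂)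
  · intro a ha
    rw [mem_starI hcV hcW] at ha ⊢
    exact ⟨nzMod_of_isPrime inferInstance (hf₁.resolve_left hWV) a ha.1,
      nzMod_of_isPrime inferInstance hf₂ a ha.2⟩

lemma starI_insert (V : Set σ) (c : σ) (W : Set σ) (t : σ) :
    starI K (insert t V) c W = starI K V c W ⊔ Ideal.span {X t} := by
  rw [starI, varI_insert, starI, sup_right_comm]

lemma starI_sup_span_add {V W : Set σ} {c s t : σ} (ht : t ∈ V) :
    starI K V c W ⊔ Ideal.span {X s + X t} = starI K (insert s V) c W := by
  have htm : (X t : MvPolynomial σ K) ∈ starI K V c W := Ideal.mem_sup_left (X_mem_varI ht)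
  rw [starI_insert]
  apply le_antisymm
  · refine sup_le le_sup_left ((Ideal.span_singleton_le_iff_mem _).2 (Ideal.add_mem _ ?_ ?_))
    · exact Ideal.mem_sup_right (Ideal.mem_span_singleton_self _)
    · exact Ideal.mem_sup_left htm
  · refine sup_le le_sup_left ((Ideal.span_singleton_le_iff_mem _).2 ?_)
    have := Ideal.sub_mem _ (Ideal.mem_sup_right (Ideal.mem_span_singleton_self (X s + X t)) :
      _ ∈ starI K V c W ⊔ Ideal.span {X s + X t}) (Ideal.mem_sup_left htm)
    simpa using this

/-! ### Two stars -/

variable (K) in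
/-- The ideal generated by the variables in `V` and the edges of two stars: `x_c x_j` for `j ∈ A`
and `x_d x_j` for `j ∈ B`. -/
noncomputable def twoStarI (V : Set σ) (c : σ) (A : Set σ) (d : σ) (B : Set σ) :
    Ideal (MvPolynomial σ K) :=
  starI K V c A ⊔ Ideal.span ((fun j => X d * X j) '' B)

lemma twoStarI_insert (V : Set σ) (c : σ) (A : Set σ) (d : σ) (B : Set σ) (t : σ) :
    twoStarI K (insert t V) c A d B = twoStarI K V c A d B ⊔ Ideal.span {X t} := by
  rw [twoStarI, starI_insert, twoStarI, sup_right_comm]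

lemma twoStarI_sup_X (V : Set σ) (c : σ) (A : Set σ) (d : σ) (B : Set σ) :
    starI K (insert d V) c A = twoStarI K V c A d B ⊔ Ideal.span {X d} := by
  rw [starI_insert, twoStarI, sup_assoc]
  congr 1
  refine (sup_eq_right.2 (Ideal.span_le.2 ?_)).symm
  rintro _ ⟨j, -, rfl⟩
  exact Ideal.mul_mem_right _ _ (Ideal.mem_span_singleton_self _)

lemma twoStarI_le_varI {V A B T : Set σ} {c d : σ} (hV : V ⊆ T) (hB : B ⊆ T)
    (hA : c ∈ T ∨ A ⊆ T) : twoStarI K V c A d B ≤ varI K T := by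
  refine sup_le (sup_le (varI_mono hV) (Ideal.span_le.2 ?_)) (Ideal.span_le.2 ?_)
  · rintro _ ⟨j, hj, rfl⟩
    rcases hA with h | h
    · exact Ideal.mul_mem_right _ _ (X_mem_varI h)
    · exact Ideal.mul_mem_left _ _ (X_mem_varI (h hj))
  · rintro _ ⟨j, hj, rfl⟩
    exact Ideal.mul_mem_left _ _ (X_mem_varI (hB hj))

/-- The colon ideal of a two-star ideal by the centre `x_d` is the star ideal `(V, B) + x_c A`. -/
lemma X_mul_mem_twoStarI_iff {V A B : Set σ} {c d : σ} (hcd : c ≠ d) (hcV : c ∉ V) (hcA : c ∉ A)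
    (hcB : c ∉ B) (hdV : d ∉ V) (hdA : d ∉ A) (hdB : d ∉ B) (a : MvPolynomial σ K) :
    X d * a ∈ twoStarI K V c A d B ↔ a ∈ starI K (V ∪ B) c A := by
  constructor
  · intro h
    rw [mem_starI (by simp [hcV, hcB]) hcA]
    constructor
    · refine nzMod_of_isPrime inferInstance (f := X d) (fun h => ?_) a
        (twoStarI_le_varI (fun x hx => ?_) (fun x hx => ?_) (Or.inl ?_) h)
      · simpa [hcd.symm, hdV, hdB] using X_mem_varI_iff.1 h
      all_goals simp_all
    · refine nzMod_of_isPrime inferInstance (f := X d) (fun h => ?_) a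
        (twoStarI_le_varI (fun x hx => ?_) (fun x hx => ?_) (Or.inr fun x hx => ?_) h)
      · simpa [hdA, hdV, hdB] using X_mem_varI_iff.1 h
      all_goals simp_all
  · intro h
    have hle : starI K (V ∪ B) c A ≤ Submodule.comap (LinearMap.mulLeft (MvPolynomial σ K) (X d))
        (twoStarI K V c A d B) := by
      refine sup_le (Ideal.span_le.2 ?_) (Ideal.span_le.2 ?_)
      · rintro _ ⟨j, hj | hj, rfl⟩
        · exact Ideal.mul_mem_left _ _ (Ideal.mem_sup_left (Ideal.mem_sup_left (X_mem_varI hj)))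
        · have : X d * X j ∈ twoStarI K V c A d B :=
            Ideal.mem_sup_right (Ideal.subset_span ⟨j, hj, rfl⟩)
          exact this
      · rintro _ ⟨j, hj, rfl⟩
        have : X c * X j ∈ twoStarI K V c A d B :=
          Ideal.mem_sup_left (Ideal.mem_sup_right (Ideal.subset_span ⟨j, hj, rfl⟩))
        change X d * (X c * X j) ∈ twoStarI K V c A d B
        exact Ideal.mul_mem_left _ _ this
    exact hle h

open RingTheory.Sequence in
/-- The lower bound for the depth. The isolated variables `l` come first, so that every ideal met
before the last step is radical; `V` collects those already divided out. -/
lemma isWeaklyRegular_twoStarI {A B : Set σ} {c d p q : σ} (hcd : c ≠ d) (hcA : c ∉ A)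
    (hcB : c ∉ B) (hdA : d ∉ A) (hdB : d ∉ B) (hpB : p ∈ B) (hpA : p ∉ A) (hqA : q ∈ A)
    (hq : q ∉ B ∨ A ⊆ B) (l : List σ) : ∀ (V : Set σ), l.Nodup → c ∉ V → d ∉ V → p ∉ V → q ∉ V →
    (∀ t ∈ l, t ≠ c ∧ t ≠ d ∧ t ∉ A ∧ t ∉ B ∧ t ∉ V) →
    IsWeaklyRegular (MvPolynomial σ K ⧸ twoStarI K V c A d B)
      (l.map (X : σ → MvPolynomial σ K) ++ [X d + X p, X c + X q]) := by
  induction l with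
  | nil =>
    intro V _ hcV hdV hpV hqV _
    have hpc : p ≠ c := fun h => hcB (h ▸ hpB)
    have hpd : p ≠ d := fun h => hdB (h ▸ hpB)
    have hqc : q ≠ c := fun h => hcA (h ▸ hqA)
    have hqd : q ≠ d := fun h => hdA (h ▸ hqA)
    have hqp : q ≠ p := fun h => hpA (h ▸ hqA)
    have h₁ := twoStarI_sup_X (K := K) V c A d B
    have h₂ := X_mul_mem_twoStarI_iff (K := K) hcd hcV hcA hcB hdV hdA hdB
    have hf₁ : NZMod (starI K (insert d V) c A) (X d + X p) := by
      refine nzMod_starI (by simp [hcd, hcV]) hcA (Or.inr ?_) ?_ <;> rw [add_comm]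
      · exact X_add_X_notMem (by simp [hpc, hpd, hpV]) hpd
      · exact X_add_X_notMem (by simp [hpA, hpd, hpV]) hpd
    have hf₂ : NZMod (starI K (V ∪ B) c A) (X d + X p) := by
      refine nzMod_starI (by simp [hcB, hcV]) hcA (Or.inr ?_) ?_
      · exact X_add_X_notMem (by simp [hdB, hdV, hcd.symm]) hpd.symm
      · exact X_add_X_notMem (by simp [hdB, hdV, hdA]) hpd.symm
    refine isWeaklyRegular_quotient_cons (NZMod.of_colon h₁ h₂ hf₁ hf₂)
      (isWeaklyRegular_quotient_cons (NZMod.sup_of_colon h₁ h₂ hf₁ ?_ ?_) (by simp))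
    · rw [add_comm (X d), starI_sup_span_add (by simp)]
      refine nzMod_starI (by simp [hcd, hcV, hpc.symm]) hcA (Or.inr ?_) ?_
      · rw [add_comm]
        exact X_add_X_notMem (by simp [hqc, hqd, hqp, hqV]) hqc
      · exact X_add_X_notMem (by simp [hcd, hcV, hcA, hpc.symm]) hqc.symm
    · rw [starI_sup_span_add (by simp [hpB])]
      refine nzMod_starI (by simp [hcd, hcV, hcB]) hcA ?_ ?_
      · rcases hq with hq | hq
        · right
          rw [add_comm]
          exact X_add_X_notMem (by simp [hqc, hqd, hq, hqV]) hqc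
        · left
          exact fun x hx => by simp [hq hx]
      · exact X_add_X_notMem (by simp [hcd, hcV, hcA, hcB]) hqc.symm
  | cons t l ih =>
    intro V hl hcV hdV hpV hqV ht
    obtain ⟨htc, htd, htA, htB, htV⟩ := ht t (by simp)
    rw [List.nodup_cons] at hl
    have h₁ := twoStarI_sup_X (K := K) V c A d B
    have h₂ := X_mul_mem_twoStarI_iff (K := K) hcd hcV hcA hcB hdV hdA hdB
    refine isWeaklyRegular_quotient_cons (NZMod.of_colon h₁ h₂ ?_ ?_) ?_
    · refine nzMod_starI (by simp [hcd, hcV]) hcA (Or.inr ?_) ?_ <;> rw [X_mem_varI_iff]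
      · simp [htc, htd, htV]
      · simp [htA, htd, htV]
    · refine nzMod_starI (by simp [hcB, hcV]) hcA (Or.inr ?_) ?_ <;> rw [X_mem_varI_iff]
      · simp [htc, htB, htV]
      · simp [htA, htB, htV]
    · rw [← twoStarI_insert]
      refine ih _ hl.2 (by simp [hcV, htc.symm]) (by simp [hdV, htd.symm]) ?_ ?_ ?_
      · rintro (rfl | h)
        exacts [htB hpB, hpV h]
      · rintro (rfl | h)
        exacts [htA hqA, hqV h]
      · intro s hs
        obtain ⟨h1, h2, h3, h4, h5⟩ := ht s (by simp [hs])
        refine ⟨h1, h2, h3, h4, ?_⟩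
        rintro (rfl | h)
        exacts [hl.1 hs, h5 h]

/-- The prime `(A ∪ B)` is the annihilator of `x_c x_d`. -/
lemma varI_mem_associatedPrimes {A B : Set σ} {c d : σ} [Finite σ] (hcA : c ∉ A) (hcB : c ∉ B)
    (hdA : d ∉ A) (hdB : d ∉ B) :
    varI K (A ∪ B) ∈
      associatedPrimes (MvPolynomial σ K) (MvPolynomial σ K ⧸ twoStarI K ∅ c A d B) := by
  rw [AssociatedPrimes.mem_iff, isAssociatedPrime_iff]
  refine ⟨inferInstance, Ideal.Quotient.mk _ (X c * X d), ?_⟩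
  ext a
  rw [Submodule.mem_colon_singleton, Submodule.mem_bot]
  change _ ↔ Ideal.Quotient.mk (twoStarI K ∅ c A d B) (a * (X c * X d)) = 0
  rw [Ideal.Quotient.eq_zero_iff_mem]
  constructor
  · intro h
    have hle : varI K (A ∪ B) ≤ Submodule.comap
        (LinearMap.mulLeft (MvPolynomial σ K) (X c * X d)) (twoStarI K ∅ c A d B) := by
      refine Ideal.span_le.2 ?_
      rintro _ ⟨j, hj | hj, rfl⟩
      · have : X c * X j ∈ twoStarI K ∅ c A d B :=
          Ideal.mem_sup_left (Ideal.mem_sup_right (Ideal.subset_span ⟨j, hj, rfl⟩))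
        change X c * X d * X j ∈ twoStarI K ∅ c A d B
        rw [mul_right_comm]
        exact Ideal.mul_mem_right _ _ this
      · have : X d * X j ∈ twoStarI K ∅ c A d B :=
          Ideal.mem_sup_right (Ideal.subset_span ⟨j, hj, rfl⟩)
        change X c * X d * X j ∈ twoStarI K ∅ c A d B
        rw [mul_assoc]
        exact Ideal.mul_mem_left _ _ this
    rw [mul_comm]
    exact hle h
  · intro h
    have h' := twoStarI_le_varI (K := K) (T := A ∪ B) (by simp) (by simp) (Or.inr (by simp)) h
    refine ((varI_isPrime _).mem_or_mem h').resolve_right fun h => ?_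
    rcases (varI_isPrime _).mem_or_mem h with h | h
    · simpa [hcA, hcB] using X_mem_varI_iff.1 h
    · simpa [hdA, hdB] using X_mem_varI_iff.1 h

end Variables

/-! ### The depth -/

/-- The depth for two stars whose isolated vertices, neither centres nor leaves, are listed by `l`.
-/
theorem smDepth_twoStarI {K : Type} [Field K] {n : ℕ} {A B : Set (Fin n)} {c d p q : Fin n}
    (hcd : c ≠ d) (hcA : c ∉ A) (hcB : c ∉ B) (hdA : d ∉ A) (hdB : d ∉ B) (hpB : p ∈ B)
    (hpA : p ∉ A) (hqA : q ∈ A) (hq : q ∉ B ∨ A ⊆ B) (l : List (Fin n)) (hl : l.Nodup)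
    (hlt : ∀ t, t ∈ l ↔ t ≠ c ∧ t ≠ d ∧ t ∉ A ∧ t ∉ B) :
    smDepth K n (twoStarI K ∅ c A d B) = l.length + 2 := by
  classical
  have hm : Ideal.span (Set.range (X : Fin n → MvPolynomial (Fin n) K)) = varI K Set.univ := by
    rw [varI, Set.image_univ]
  have hXm : ∀ t, (X t : MvPolynomial (Fin n) K) ∈ varI K Set.univ :=
    fun t => X_mem_varI (Set.mem_univ t)
  rw [smDepth, hm]
  refine IsGreatest.csSup_eq ⟨?_, ?_⟩
  · have hmem : ∀ r ∈ l.map X ++ [X d + X p, X c + X q],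
        r ∈ (varI K Set.univ : Ideal (MvPolynomial (Fin n) K)) := by
      intro r hr
      simp only [List.mem_append, List.mem_map, List.mem_cons, List.not_mem_nil, or_false] at hr
      rcases hr with ⟨t, -, rfl⟩ | rfl | rfl
      exacts [hXm t, Ideal.add_mem _ (hXm _) (hXm _), Ideal.add_mem _ (hXm _) (hXm _)]
    refine ⟨_, by simp, hmem, isRegular_quotient_of_le (varI_isPrime Set.univ).ne_top
      (twoStarI_le_varI (Set.subset_univ _) (Set.subset_univ _) (Or.inl (Set.mem_univ _))) hmem
      (isWeaklyRegular_twoStarI hcd hcA hcB hdA hdB hpB hpA hqA hq l ∅ hl (by simp) (by simp)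
        (by simp) (by simp) fun t ht => ?_)⟩
    obtain ⟨h1, h2, h3, h4⟩ := (hlt t).1 ht
    exact ⟨h1, h2, h3, h4, by simp⟩
  · rintro _ ⟨rs, rfl, hrs, hreg⟩
    have key := height_add_length_le_of_isPrime (varI_mem_associatedPrimes (K := K) hcA hcB hdA hdB)
      (varI K Set.univ) (varI_mono (Set.subset_univ _)) rs hrs hreg.toIsWeaklyRegular
    set s : Finset (Fin n) := Finset.univ.filter (· ∈ A ∪ B) with hs
    have hsAB : (s : Set (Fin n)) = A ∪ B := by ext; simp [hs]
    rw [MvPolynomial.ringKrullDim_of_isNoetherianRing, ringKrullDim_eq_zero_of_field, zero_add,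
      Nat.card_fin, ← hsAB] at key
    have hcard : s.card + rs.length ≤ n := by
      have h1 : ((s.card : ℕ∞) + rs.length) ≤ (n : ℕ∞) := by
        refine (add_le_add_left (card_le_height_varI (K := K) s) _).trans ?_
        exact_mod_cast key
      exact_mod_cast h1
    have hcompl : sᶜ = insert c (insert d l.toFinset) := by
      ext t
      simp only [hs, Finset.mem_compl, Finset.mem_filter, Finset.mem_univ, true_and,
        Finset.mem_insert, List.mem_toFinset, hlt, Set.mem_union]
      by_cases h1 : t = c
      · simp [h1, hcA, hcB]
      by_cases h2 : t = d
      · simp [h2, hdA, hdB]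
      simp [h1, h2]
    have h2 : sᶜ.card = l.length + 2 := by
      rw [hcompl, Finset.card_insert_of_notMem, Finset.card_insert_of_notMem,
        List.toFinset_card_of_nodup hl]
      · simp [hlt]
      · simp [hlt, hcd]
    have h3 := Finset.card_add_card_compl s
    rw [Fintype.card_fin] at h3
    omega

/-- The lexsegment ideal in terms of the zero-based indices of `Fin n`. -/
lemma lexSegIdeal_eq_twoStarI (K : Type) [Field K] {n i k : ℕ} (hi3 : 3 ≤ i) (hk3 : 3 ≤ k)
    (hkn : k ≤ n) :
    lexSegIdeal K n (1, i) (2, k) = twoStarI K ∅ (⟨0, by omega⟩ : Fin n) {j | i ≤ j.val + 1}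
      ⟨1, by omega⟩ {j | 2 ≤ j.val ∧ j.val < k} := by
  apply le_antisymm
  · refine Ideal.span_le.2 ?_
    rintro _ ⟨⟨a, b⟩, ⟨⟨h1, h2, h3⟩, h4, h5⟩, rfl⟩
    simp only [lexGE] at h1 h2 h3 h4 h5
    have hb : b - 1 < n := by omega
    obtain rfl | rfl : a = 1 ∨ a = 2 := by omega
    · refine Ideal.mem_sup_left (Ideal.mem_sup_right (Ideal.subset_span ⟨⟨b - 1, hb⟩, ?_, ?_⟩))
      · simp only [Set.mem_ofPred_eq]; omega
      · have : 0 < n := by omega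
        simp [xv, hb, this]
    · refine Ideal.mem_sup_right (Ideal.subset_span ⟨⟨b - 1, hb⟩, ?_, ?_⟩)
      · simp only [Set.mem_ofPred_eq]; omega
      · have : 1 < n := by omega
        simp [xv, hb, this]
  · refine sup_le (sup_le (by simp [varI]) (Ideal.span_le.2 ?_)) (Ideal.span_le.2 ?_)
    · rintro _ ⟨j, hj, rfl⟩
      simp only [Set.mem_ofPred_eq] at hj
      have := j.isLt
      refine Ideal.subset_span ⟨(1, j.val + 1), ⟨⟨?_, ?_, ?_⟩, ?_, ?_⟩, ?_⟩
      · simp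
      · simp only; omega
      · simp only; omega
      · exact Or.inr ⟨rfl, hj⟩
      · exact Or.inl one_lt_two
      · have : 0 < n := by omega
        simp [xv, this]
    · rintro _ ⟨j, hj, rfl⟩
      simp only [Set.mem_ofPred_eq] at hj
      have := j.isLt
      refine Ideal.subset_span ⟨(2, j.val + 1), ⟨⟨?_, ?_, ?_⟩, ?_, ?_⟩, ?_⟩
      · simp
      · simp only; omega
      · simp only; omega
      · exact Or.inl one_lt_two
      · exact Or.inr ⟨rfl, hj.2⟩
      · have : 1 < n := by omega
        simp [xv, this]

lemma twoStarI_comm {σ K : Type*} [Field K] (V : Set σ) (c : σ) (A : Set σ) (d : σ) (B : Set σ) :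
    twoStarI K V c A d B = twoStarI K V d B c A := by
  rw [twoStarI, twoStarI, starI, starI, sup_right_comm]

/-- For the lexsegment edge ideal `I = (L(x_1 x_i, x_2 x_k))`
with `3 ≤ i ≤ n`, `3 ≤ k ≤ n`, `u >_lex v` and `v >_lex x_{i-1} x_n`:
`depth(S/I) = 2` if `k ≥ i`, and `depth(S/I) = i + 1 - k` if `i > k`. -/
theorem lexSegIdeal_depth_formula (K : Type) [Field K] (n i k : ℕ)
    (hi3 : 3 ≤ i) (hin : i ≤ n) (hk3 : 3 ≤ k) (hkn : k ≤ n)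
    (huv : lexGT (1, i) (2, k)) (hv : lexGT (2, k) (i - 1, n)) :
    (i ≤ k → smDepth K n (lexSegIdeal K n (1, i) (2, k)) = 2) ∧
      (k < i → smDepth K n (lexSegIdeal K n (1, i) (2, k)) = i + 1 - k) := by
  rw [lexSegIdeal_eq_twoStarI K hi3 hk3 hkn]
  simp only [lexGT] at hv
  -- For `i = 3` the leaf `3` of `x_2` is also a leaf of `x_1`, so the two stars exchange roles.
  obtain rfl | hi4 : i = 3 ∨ 4 ≤ i := by omega
  · refine ⟨fun _ => ?_, fun h => by omega⟩
    rw [twoStarI_comm]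
    refine smDepth_twoStarI (p := ⟨n - 1, by omega⟩) (q := ⟨2, by omega⟩)
      ?_ ?_ ?_ ?_ ?_ ?_ ?_ ?_ (Or.inr ?_) [] List.nodup_nil ?_
    · simp
    · simp
    · simp
    · simp
    · simp
    · simp only [Set.mem_ofPred_eq]; omega
    · simp only [Set.mem_ofPred_eq]; omega
    · simp only [Set.mem_ofPred_eq]; omega
    · intro x; simp only [Set.mem_ofPred_eq]; omega
    · intro t; simp only [Set.mem_ofPred_eq, Fin.ext_iff, List.not_mem_nil, ne_eq,
        false_iff]; omega
  · set l : List (Fin n) := (Finset.univ.filter fun t : Fin n => k ≤ t.val ∧ t.val < i - 1).toList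
      with hl
    have hlen : l.length = i - 1 - k := by
      rw [hl, Finset.length_toList, ← Finset.card_map Fin.valEmbedding,
        ← Nat.card_Ico k (i - 1)]
      refine congrArg Finset.card ?_
      ext t
      simp only [Finset.mem_map, Finset.mem_filter, Finset.mem_univ, true_and,
        Fin.valEmbedding_apply, Finset.mem_Ico]
      constructor
      · rintro ⟨a, ha, rfl⟩; exact ha
      · intro ht; exact ⟨⟨t, by omega⟩, ht, rfl⟩
    have hlt : ∀ t, t ∈ l ↔ k ≤ t.val ∧ t.val < i - 1 := by simp [hl]
    have key := smDepth_twoStarI (K := K) (n := n) (c := ⟨0, by omega⟩) (d := ⟨1, by omega⟩)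
      (A := {j | i ≤ j.val + 1}) (B := {j | 2 ≤ j.val ∧ j.val < k})
      (p := ⟨2, by omega⟩) (q := ⟨n - 1, by omega⟩)
      (by simp) (by simp only [Set.mem_ofPred_eq]; omega) (by simp)
      (by simp only [Set.mem_ofPred_eq]; omega) (by simp)
      (by simp only [Set.mem_ofPred_eq]; omega) (by simp only [Set.mem_ofPred_eq]; omega)
      (by simp only [Set.mem_ofPred_eq]; omega)
      (by
        by_cases hkn' : k < n
        · left; simp only [Set.mem_ofPred_eq]; omega
        · right; intro x; simp only [Set.mem_ofPred_eq]; omega) l (Finset.nodup_toList _)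
      (by intro t; rw [hlt]; simp only [Set.mem_ofPred_eq, Fin.ext_iff, ne_eq]; omega)
    rw [key, hlen]
    omega
end

section
/- Let I = (L(u,v)) ⊂ S = K[x_1,…,x_n] be a lexsegment edge ideal with x_1 | u and u ≠ v. Then S/I is Cohen–Macaulay if and only if one of the following holds: (i) I = I_{n,2}, the ideal generated by all squarefree monomials of degree 2 in x_1,…,x_n; (ii) n ≥ 4, u = x_1x_n, and v ∈ {x_2x_3, x_{n-2}x_{n-1}, x_{n-2}x_n}; (iii) n ≥ 3, u = x_1x_{n-1}, and v = x_{n-2}x_{n-1}. -/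
/-!
The edge ideal of a graph on `n` vertices is the Stanley–Reisner ideal of its independence complex,
and everything is decided on that complex.

Two bounds on the depth show that an ideal is not Cohen–Macaulay. First, depth is at most the
dimension of `S / P` for every prime `P` associated to the ideal; this is proved by localizing at the
graded maximal ideal (`WReg.length_le`) and yields that a vertex set `C` adjacent to an independent
set `F` bounds the depth by `n - |C|` (`not_CM_of_small`). Secondly, a disconnected complex has depth
at most one (`not_CM_of_disconnected`). The dimension is at least the size of any independent set,
and for the lexsegment ending at `v = x_j x_k` the vertices `j+1,…,n` are independent. A case
distinction on `i`, `j`, `k` rules out everything but the listed ideals (`not_CM_numeric`).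

For the listed ideals the complex is pure and shellable. The facets can be coloured so that every
facet has exactly one vertex of each colour; the sums of the variables of one colour then form a
regular sequence on the polynomial ring of every facet (`WReg_SR_facet`). Attaching the facets in a
shelling order keeps the sequence regular, by the exact sequence
`0 → S / (J : f) → S / J → S / (J + (f)) → 0` with `f` the monomial of the minimal new face
(`WReg_SR_insert`). The length of the sequence is the dimension, so depth and dimension agree.
The complexes in question are a set of points (`CM_complete`), the join of two pairs of points with
a simplex (`CM_two_three`), and connected graphs (`CM_dim_two_a`, `CM_dim_two_b`).
-/

open MvPolynomial

/-! ### Weakly regular sequences on a quotient ring -/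

/-- `WReg J rs` says that `rs` is a weakly regular sequence on `R / J`. It is phrased by ideal
membership, so that adjoining an element only enlarges `J`. -/
def WReg {R : Type*} [CommRing R] : Ideal R → List R → Prop
  | _, [] => True
  | J, y :: rs => (∀ f, y * f ∈ J → f ∈ J) ∧ WReg (J ⊔ Ideal.span {y}) rs

open scoped Pointwise in
theorem isWeaklyRegular_iff_WReg {R : Type*} [CommRing R] (J : Ideal R) (rs : List R) :
    RingTheory.Sequence.IsWeaklyRegular (R ⧸ J) rs ↔ WReg J rs := by
  induction rs generalizing J with
  | nil => simp [WReg]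
  | cons y rs ih =>
    rw [RingTheory.Sequence.isWeaklyRegular_cons_iff, WReg, ← ih]
    refine and_congr ?_ ?_
    · rw [isSMulRegular_iff_right_eq_zero_of_smul]
      constructor
      · intro h f hf
        rw [← Ideal.Quotient.eq_zero_iff_mem] at hf ⊢
        exact h _ (by rw [Algebra.smul_def, Ideal.Quotient.algebraMap_eq, ← map_mul, hf])
      · intro h m hm
        obtain ⟨f, rfl⟩ := Ideal.Quotient.mk_surjective m
        rw [Algebra.smul_def, Ideal.Quotient.algebraMap_eq, ← map_mul,
          Ideal.Quotient.eq_zero_iff_mem] at hm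
        exact Ideal.Quotient.eq_zero_iff_mem.mpr (h f hm)
    · have e1 : (y • (⊤ : Submodule R (R ⧸ J))) = Submodule.map J.mkQ (Ideal.span {y}) := by
        ext m
        rw [Submodule.mem_smul_pointwise_iff_exists, Submodule.mem_map]
        constructor
        · rintro ⟨b, -, rfl⟩
          obtain ⟨f, rfl⟩ := Submodule.Quotient.mk_surjective _ b
          exact ⟨y * f, Ideal.mul_mem_right _ _ (Ideal.mem_span_singleton_self y), rfl⟩
        · rintro ⟨f, hf, rfl⟩
          obtain ⟨g, rfl⟩ := Ideal.mem_span_singleton.mp hf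
          exact ⟨Submodule.Quotient.mk g, trivial, rfl⟩
      exact LinearEquiv.isWeaklyRegular_congr
        ((Submodule.quotEquivOfEq _ _ e1).trans
          (Submodule.quotientQuotientEquivQuotientSup J (Ideal.span {y}))) rs

/-- Weak regularity on `R / (J + (f))` and on `R / (J : f)` gives it on `R / J`, because of the
exact sequence `0 → R / (J : f) → R / J → R / (J + (f)) → 0`. -/
theorem WReg.shell {R : Type*} [CommRing R] (f : R) (rs : List R) (J C : Ideal R)
    (hC : ∀ h, h ∈ C ↔ f * h ∈ J) (h1 : WReg (J ⊔ Ideal.span {f}) rs) (h2 : WReg C rs) :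
    WReg J rs := by
  induction rs generalizing J C with
  | nil => trivial
  | cons y rs ih =>
    obtain ⟨h1a, h1b⟩ := h1
    obtain ⟨h2a, h2b⟩ := h2
    have key : ∀ g, y * g ∈ J → ∃ j ∈ J, ∃ k, g = j + f * k := by
      intro g hg
      have := h1a g (Ideal.mem_sup_left hg)
      obtain ⟨j, hj, k, hk, rfl⟩ := Submodule.mem_sup.mp this
      obtain ⟨k, rfl⟩ := Ideal.mem_span_singleton'.mp hk
      exact ⟨j, hj, k, by ring⟩
    refine ⟨fun g hg => ?_, ?_⟩
    · obtain ⟨j, hj, k, rfl⟩ := key g hg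
      refine J.add_mem hj ((hC _).mp (h2a _ ((hC _).mpr ?_)))
      have := J.sub_mem hg (J.mul_mem_left y hj)
      convert this using 1; ring
    · refine ih _ (C ⊔ Ideal.span {y}) ?_ ?_ h2b
      · intro h
        constructor
        · intro hh
          obtain ⟨c, hc, k, hk, rfl⟩ := Submodule.mem_sup.mp hh
          obtain ⟨k, rfl⟩ := Ideal.mem_span_singleton'.mp hk
          rw [mul_add]
          exact Ideal.add_mem _ (Ideal.mem_sup_left ((hC _).mp hc))
            (Ideal.mem_sup_right (Ideal.mem_span_singleton'.mpr ⟨f * k, by ring⟩))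
        · intro hh
          obtain ⟨j, hj, k, hk, hjk⟩ := Submodule.mem_sup.mp hh
          obtain ⟨k, rfl⟩ := Ideal.mem_span_singleton'.mp hk
          have : y * k ∈ J ⊔ Ideal.span {f} := by
            have : y * k = f * h - j := by rw [← hjk]; ring
            rw [this]
            exact Ideal.sub_mem _
              (Ideal.mem_sup_right (Ideal.mem_span_singleton'.mpr ⟨h, by ring⟩))
              (Ideal.mem_sup_left hj)
          obtain ⟨j', hj', l, hl, hjl⟩ := Submodule.mem_sup.mp (h1a _ this)
          obtain ⟨l, rfl⟩ := Ideal.mem_span_singleton'.mp hl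
          have hc : h - y * l ∈ C := by
            rw [hC]
            have : f * (h - y * l) = j + y * j' := by
              rw [mul_sub, ← hjk, ← hjl]; ring
            rw [this]
            exact J.add_mem hj (J.mul_mem_left _ hj')
          rw [← sub_add_cancel h (y * l)]
          exact Ideal.add_mem _ (Ideal.mem_sup_left hc)
            (Ideal.mem_sup_right (Ideal.mem_span_singleton'.mpr ⟨l, by ring⟩))
      · rwa [sup_right_comm]

theorem WReg.map {R : Type*} [CommRing R] (M : Submonoid R) {R' : Type*} [CommRing R'] [Algebra R R']
    [IsLocalization M R'] (rs : List R) (J : Ideal R) (h : WReg J rs) :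
    WReg (J.map (algebraMap R R')) (rs.map (algebraMap R R')) := by
  induction rs generalizing J with
  | nil => trivial
  | cons y rs ih =>
    refine ⟨fun g hg => ?_, ?_⟩
    · obtain ⟨⟨a, s⟩, ha⟩ := IsLocalization.surj M g
      have h3 : algebraMap R R' (y * a) ∈ J.map (algebraMap R R') := by
        rw [map_mul, ← ha, ← mul_assoc]
        exact Ideal.mul_mem_right _ _ hg
      rw [IsLocalization.algebraMap_mem_map_algebraMap_iff M] at h3
      obtain ⟨t, ht, hta⟩ := h3
      have h4 : t * a ∈ J := h.1 _ (by rwa [mul_left_comm] at hta)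
      have h5 : algebraMap R R' a ∈ J.map (algebraMap R R') :=
        (IsLocalization.algebraMap_mem_map_algebraMap_iff M _ _ _).mpr ⟨t, ht, h4⟩
      simp only at ha
      rw [← ha] at h5
      exact (Ideal.mul_unit_mem_iff_mem _ (IsLocalization.map_units R' s)).mp h5
    · have := ih _ h.2
      rwa [Ideal.map_sup, Ideal.map_span, Set.image_singleton] at this

/-- The length of a weakly regular sequence in the maximal ideal of a local ring is at most
`dim R / K` as soon as `K` annihilates a nonzero element of `R / J`. For `K` an associated prime this
is the classical bound of the depth by `dim R / P`. In the induction `z` is first pushed to an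
associated prime `P ⊇ K`; the first element `x` of the sequence lies outside `P`, and Nakayama
applied to `(J : P)` yields an element of `R / (J + (x))` that is nonzero and killed by `P + (x)`. -/
theorem WReg.length_le_local {R : Type*} [CommRing R] [IsLocalRing R] [IsNoetherianRing R]
    (rs : List R) (hrs : ∀ a ∈ rs, a ∈ IsLocalRing.maximalIdeal R) (J K : Ideal R) (z : R)
    (hz : z ∉ J) (hK : ∀ a ∈ K, a * z ∈ J) (h : WReg J rs) :
    (rs.length : WithBot ℕ∞) ≤ ringKrullDim (R ⧸ K) := by
  induction rs generalizing J K z with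
  | nil =>
    have : Nontrivial (R ⧸ K) := Ideal.Quotient.nontrivial_iff.mpr (by
      rintro rfl
      exact hz (by simpa using hK 1 trivial))
    simpa using ringKrullDim_nonneg_of_nontrivial
  | cons x rs ih =>
    have hz0 : (Ideal.Quotient.mk J z) ≠ 0 := by rwa [ne_eq, Ideal.Quotient.eq_zero_iff_mem]
    obtain ⟨P, hP, hle⟩ := exists_le_isAssociatedPrime_of_isNoetherianRing R _ hz0
    obtain ⟨hPp, w, hw⟩ := isAssociatedPrime_iff.mp hP
    obtain ⟨w, rfl⟩ := Ideal.Quotient.mk_surjective w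
    have hPw : ∀ a, a ∈ P ↔ a * w ∈ J := by
      intro a
      rw [hw, Submodule.mem_colon_singleton, Submodule.mem_bot, Algebra.smul_def,
        Ideal.Quotient.algebraMap_eq, ← map_mul, Ideal.Quotient.eq_zero_iff_mem]
    have hKP : K ≤ P := by
      intro a ha
      apply hle
      rw [Submodule.mem_colon_singleton, Submodule.mem_bot, Algebra.smul_def,
        Ideal.Quotient.algebraMap_eq, ← map_mul, Ideal.Quotient.eq_zero_iff_mem]
      exact hK a ha
    have hwJ : w ∉ J := fun hh => hPp.ne_top (P.eq_top_iff_one.mpr ((hPw 1).mpr (by simpa using hh)))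
    have hxP : x ∉ P := fun hh => hwJ (h.1 _ ((hPw x).mp hh))
    -- the ideal `(J : P)`
    let N : Ideal R := ⨅ a : P, Submodule.comap (LinearMap.mulLeft R (a : R)) J
    have hN : ∀ n, n ∈ N ↔ ∀ a ∈ P, a * n ∈ J := by
      intro n
      simp [N, Submodule.mem_iInf]
    -- by Nakayama, `(J : P) ⊆ J + (x)` would force `(J : P) ⊆ J`, but `w` is in the difference
    have hex : ∃ n ∈ N, n ∉ J ⊔ Ideal.span {x} := by
      by_contra! hcon
      have hle : N ≤ J ⊔ Ideal.span {x} • N := by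
        intro n hn
        obtain ⟨j, hj, k, hk, rfl⟩ := Submodule.mem_sup.mp (hcon n hn)
        obtain ⟨c, rfl⟩ := Ideal.mem_span_singleton.mp hk
        refine Submodule.add_mem_sup hj
          (Ideal.mul_mem_mul (Ideal.mem_span_singleton_self x) ((hN c).mpr fun a ha => ?_))
        apply h.1
        have := J.sub_mem ((hN _).mp hn a ha) (J.mul_mem_left a hj)
        convert this using 1; ring
      have hNJ := Submodule.le_of_le_smul_of_le_jacobson_bot (IsNoetherian.noetherian N)
        (by
          rw [IsLocalRing.jacobson_eq_maximalIdeal ⊥ bot_ne_top, Ideal.span_singleton_le_iff_mem]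
          exact hrs x (by simp)) hle
      exact hwJ (hNJ ((hN w).mpr fun a ha => (hPw a).mp ha))
    obtain ⟨n, hnN, hn⟩ := hex
    have hIH := ih (fun a ha => hrs a (by simp [ha])) (J ⊔ Ideal.span {x}) (P ⊔ Ideal.span {x}) n hn
      (by
        intro a ha
        obtain ⟨p, hp, k, hk, rfl⟩ := Submodule.mem_sup.mp ha
        rw [add_mul]
        exact Ideal.add_mem _ (Ideal.mem_sup_left ((hN n).mp hnN p hp))
          (Ideal.mem_sup_right (Ideal.mul_mem_right _ _ hk))) h.2
    have hdrop : ringKrullDim (R ⧸ (P ⊔ Ideal.span {x})) + 1 ≤ ringKrullDim (R ⧸ P) := by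
      refine ringKrullDim_succ_le_of_surjective
        (Ideal.Quotient.factor (le_sup_left : P ≤ P ⊔ Ideal.span {x}))
        (Ideal.Quotient.factor_surjective _) (r := Ideal.Quotient.mk P x) ?_ ?_
      · rwa [mem_nonZeroDivisors_iff_ne_zero, ne_eq, Ideal.Quotient.eq_zero_iff_mem]
      · rw [Ideal.Quotient.factor_mk, Ideal.Quotient.eq_zero_iff_mem]
        exact Ideal.mem_sup_right (Ideal.mem_span_singleton_self x)
    have hKd : ringKrullDim (R ⧸ P) ≤ ringKrullDim (R ⧸ K) :=
      ringKrullDim_le_of_surjective (Ideal.Quotient.factor hKP) (Ideal.Quotient.factor_surjective _)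
    refine le_trans ?_ (hdrop.trans hKd)
    rw [List.length_cons]
    push_cast
    gcongr

/-- Version of `WReg.length_le_local` at a prime `m` of a Noetherian ring: the hypothesis on `z`
says that its image in `R / J` stays nonzero after localizing at `m`. -/
theorem WReg.length_le {R : Type*} [CommRing R] [IsNoetherianRing R] (m : Ideal R) [m.IsPrime]
    (rs : List R) (hrs : ∀ a ∈ rs, a ∈ m) (J K : Ideal R) (z : R)
    (hz : ∀ s, s * z ∈ J → s ∈ m) (hK : ∀ a ∈ K, a * z ∈ J) (h : WReg J rs) :
    (rs.length : WithBot ℕ∞) ≤ ringKrullDim (R ⧸ K) := by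
  let A := Localization.AtPrime m
  have : IsNoetherianRing A := IsLocalization.isNoetherianRing m.primeCompl A inferInstance
  have h1 := WReg.length_le_local (R := A) (rs.map (algebraMap R A)) (by
      intro a ha
      obtain ⟨b, hb, rfl⟩ := List.mem_map.mp ha
      exact (IsLocalization.AtPrime.to_map_mem_maximal_iff A m b).mpr (hrs b hb))
    (J.map (algebraMap R A)) (K.map (algebraMap R A)) (algebraMap R A z)
    (by
      rw [IsLocalization.algebraMap_mem_map_algebraMap_iff m.primeCompl]
      rintro ⟨s, hs, hsz⟩
      exact hs (hz s hsz))
    (by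
      intro a ha
      have : K.map (algebraMap R A) ≤ Submodule.comap
          (LinearMap.mulRight A (algebraMap R A z)) (J.map (algebraMap R A) : Ideal A) := by
        rw [Ideal.map_le_iff_le_comap]
        intro b hb
        show algebraMap R A b * algebraMap R A z ∈ J.map (algebraMap R A)
        rw [← map_mul]
        exact Ideal.mem_map_of_mem _ (hK b hb)
      exact this ha)
    (WReg.map m.primeCompl rs J h)
  rw [List.length_map] at h1
  refine h1.trans ?_
  rw [ringKrullDim_quotient, ringKrullDim_quotient]
  refine Order.krullDim_le_of_strictMono
    (fun p => ⟨PrimeSpectrum.comap (algebraMap R A) p.1, ?_⟩) ?_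
  · have := p.2
    rw [PrimeSpectrum.mem_zeroLocus] at this ⊢
    intro a ha
    exact this (Ideal.mem_map_of_mem _ ha)
  · intro p q hpq
    have hinj := PrimeSpectrum.localization_comap_injective A m.primeCompl
    refine lt_of_le_of_ne (Ideal.comap_mono (le_of_lt hpq)) fun he => ?_
    exact hpq.ne (Subtype.ext (hinj (congrArg Subtype.val he)))

/-- A ring that becomes disconnected on removing the point `m` has depth at most one at `m`: if
`J = J₁ ∩ J₂` and `J₁ + J₂` contains `m`, no weakly regular sequence in `m` has two elements.
The hypothesis `hsat` replaces a localization at `m`. -/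
theorem WReg.length_le_one {R : Type*} [CommRing R] (m : Ideal R) [m.IsPrime]
    (rs : List R) (hrs : ∀ a ∈ rs, a ∈ m) (J J₁ J₂ : Ideal R)
    (hsat : ∀ s f, s * f ∈ J → f ∈ J ∨ s ∈ m) (hle : J₁ ⊓ J₂ = J)
    (hm : m ≤ J₁ ⊔ J₂) (h1 : ¬ J₁ ≤ J) (h2 : ¬ J₂ ≤ J) (h : WReg J rs) :
    rs.length ≤ 1 := by
  match rs, h, hrs with
  | [], _, _ => simp
  | [_], _, _ => simp
  | x :: y :: rs, ⟨hx, hy, _⟩, hrs =>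
    exfalso
    have hprod : ∀ a ∈ J₁, ∀ b ∈ J₂, a * b ∈ J := fun a ha b hb => by
      rw [← hle]; exact ⟨J₁.mul_mem_right _ ha, J₂.mul_mem_left _ hb⟩
    obtain ⟨p, hp, q, hq, hpq⟩ := Submodule.mem_sup.mp (hm (hrs x (by simp)))
    obtain ⟨t₁, ht₁, t₂, ht₂, ht⟩ := Submodule.mem_sup.mp (hm (hrs y (by simp)))
    have hpJ : p ∉ J := by
      intro hpJ
      refine h1 fun t ht => hx _ ?_
      rw [← hpq, add_mul, mul_comm q]
      exact J.add_mem (J.mul_mem_right _ hpJ) (hprod t ht q hq)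
    have hqJ : q ∉ J := by
      intro hqJ
      refine h2 fun t ht => hx _ ?_
      rw [← hpq, add_mul]
      exact J.add_mem (hprod p hp t ht) (J.mul_mem_right _ hqJ)
    have hyp : y * p ∈ J ⊔ Ideal.span {x} := by
      have : y * p = (p * t₂ - t₁ * q) + t₁ * x := by rw [← hpq, ← ht]; ring
      rw [this]
      exact Ideal.add_mem _
        (Ideal.mem_sup_left (J.sub_mem (hprod p hp _ ht₂) (hprod _ ht₁ q hq)))
        (Ideal.mem_sup_right (Ideal.mul_mem_left _ _ (Ideal.mem_span_singleton_self x)))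
    obtain ⟨j, hj, k, hk, hjk⟩ := Submodule.mem_sup.mp (hy _ hyp)
    obtain ⟨c, rfl⟩ := Ideal.mem_span_singleton.mp hk
    have hjJ : j ∈ J₁ ⊓ J₂ := hle ▸ hj
    have e : (1 - c) * p = j + c * q := by
      linear_combination hjk.symm + c * hpq.symm
    have hc1 : (1 - c) * p ∈ J := by
      rw [← hle]
      refine ⟨J₁.mul_mem_left _ hp, ?_⟩
      rw [SetLike.mem_coe, e]
      exact J₂.add_mem hjJ.2 (J₂.mul_mem_left _ hq)
    have hc2 : c * q ∈ J := by
      have : c * q = (1 - c) * p - j := by rw [e]; ring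
      rw [this]; exact J.sub_mem hc1 hj
    have hcm := (hsat _ _ hc2).resolve_left hqJ
    have hcm' := (hsat _ _ hc1).resolve_left hpJ
    exact (Ideal.IsPrime.ne_top ‹_›) (m.eq_top_iff_one.mpr (by simpa using m.add_mem hcm' hcm))

/-! ### Stanley–Reisner ideals -/

section SR
variable {K : Type} [Field K] {n : ℕ}

/-- The Stanley–Reisner ideal of the simplicial complex whose faces are the subsets of members of
`𝓕`: the polynomials none of whose monomials is supported on such a face. The set `𝓕` need not be
closed under subsets, and need not consist of facets only. -/
def SR (K : Type) [Field K] {n : ℕ} (𝓕 : Set (Finset (Fin n))) : Ideal (MvPolynomial (Fin n) K) where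
  carrier := {f | ∀ s ∈ f.support, ∀ F ∈ 𝓕, ¬ s.support ⊆ F}
  zero_mem' := by simp
  add_mem' := by
    intro a b ha hb s hs
    rcases Finset.mem_union.mp (MvPolynomial.support_add hs) with h | h
    · exact ha s h
    · exact hb s h
  smul_mem' := by
    intro c f hf s hs F hF hsF
    obtain ⟨a, -, b, hb, rfl⟩ := Finset.mem_add.mp (MvPolynomial.support_mul c f hs)
    refine hf b hb F hF (subset_trans ?_ hsF)
    intro i hi
    simp only [Finsupp.mem_support_iff, Finsupp.add_apply] at hi ⊢
    omega

theorem mem_SR {𝓕 : Set (Finset (Fin n))} {f : MvPolynomial (Fin n) K} :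
    f ∈ SR K 𝓕 ↔ ∀ s ∈ f.support, ∀ F ∈ 𝓕, ¬ s.support ⊆ F := Iff.rfl

/-- The Stanley–Reisner ideal is the intersection of the prime ideals of the faces in `𝓕`. -/
theorem mem_SR_iff_forall {𝓕 : Set (Finset (Fin n))} {f : MvPolynomial (Fin n) K} :
    f ∈ SR K 𝓕 ↔ ∀ F ∈ 𝓕, f ∈ SR K {F} := by
  simp only [mem_SR, Set.mem_singleton_iff, forall_eq]
  exact ⟨fun h F hF s hs => h s hs F hF, fun h s hs F hF => h F hF s hs⟩

theorem SR_anti {𝓕 𝓖 : Set (Finset (Fin n))} (h : ∀ G ∈ 𝓖, ∃ F ∈ 𝓕, G ⊆ F) :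
    SR K 𝓕 ≤ SR K 𝓖 := by
  intro f hf s hs G hG hsG
  obtain ⟨F, hF, hGF⟩ := h G hG
  exact hf s hs F hF (hsG.trans hGF)

theorem monomial_mem_SR {𝓕 : Set (Finset (Fin n))} {s : Fin n →₀ ℕ} {c : K}
    (h : ∀ F ∈ 𝓕, ¬ s.support ⊆ F) : monomial s c ∈ SR K 𝓕 := by
  intro t ht
  rw [Finset.mem_singleton.mp (support_monomial_subset ht)]
  exact h

theorem X_mem_SR {𝓕 : Set (Finset (Fin n))} {i : Fin n} :
    (X i : MvPolynomial (Fin n) K) ∈ SR K 𝓕 ↔ ∀ F ∈ 𝓕, i ∉ F := by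
  simp [mem_SR, support_X, Finsupp.support_single]

/-- The exponent vector of the squarefree monomial `∏ i ∈ T, x_i`. -/
noncomputable def chi (T : Finset (Fin n)) : Fin n →₀ ℕ := Finsupp.indicator T fun _ _ => 1

theorem chi_apply (T : Finset (Fin n)) (i : Fin n) : chi T i = if i ∈ T then 1 else 0 := by
  simp [chi, Finsupp.indicator_apply]

theorem chi_support (T : Finset (Fin n)) : (chi T).support = T := by
  ext i; simp [chi_apply]

theorem chi_le {T : Finset (Fin n)} {s : Fin n →₀ ℕ} (h : T ⊆ s.support) : chi T ≤ s := by
  intro i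
  rw [chi_apply]
  split_ifs with hi
  · exact Nat.one_le_iff_ne_zero.mpr (Finsupp.mem_support_iff.mp (h hi))
  · exact Nat.zero_le _

variable (K) in
/-- The squarefree monomial `∏ i ∈ T, x_i`. -/
noncomputable def mon (T : Finset (Fin n)) : MvPolynomial (Fin n) K := monomial (chi T) 1

theorem mon_singleton (i : Fin n) : mon K {i} = X i := by
  have : chi {i} = Finsupp.single i 1 := by
    ext j; simp [chi_apply, Finsupp.single_apply, eq_comm]
  rw [mon, X, this]

/-- The colon ideal of a Stanley–Reisner ideal by `∏ i ∈ T, x_i` is the ideal of the star of `T`. -/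
theorem mon_mul_mem_SR {𝓕 : Set (Finset (Fin n))} (T : Finset (Fin n))
    (h : MvPolynomial (Fin n) K) :
    h ∈ SR K {F | F ∈ 𝓕 ∧ T ⊆ F} ↔ mon K T * h ∈ SR K 𝓕 := by
  constructor
  · intro hh s hs F hF hsF
    have hs' : ¬ coeff s (monomial (chi T) (1 : K) * h) = 0 := by simpa [mon] using hs
    rw [coeff_monomial_mul'] at hs'
    split_ifs at hs' with hle
    · have hT : T ⊆ F := by
        intro i hi
        apply hsF
        have := hle i
        rw [chi_apply, if_pos hi] at this
        rw [Finsupp.mem_support_iff]; omega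
      refine hh (s - chi T) (by simpa using hs') F ⟨hF, hT⟩ (subset_trans ?_ hsF)
      intro i hi
      simp only [Finsupp.mem_support_iff, Finsupp.tsub_apply] at hi ⊢
      omega
    · exact hs' rfl
  · rintro hh s hs F ⟨hF, hT⟩ hsF
    refine hh (chi T + s) ?_ F hF ?_
    · rw [mem_support_iff, mon, coeff_monomial_mul, one_mul]
      exact mem_support_iff.mp hs
    · intro i hi
      simp only [Finsupp.mem_support_iff, Finsupp.add_apply] at hi
      by_cases hiT : i ∈ T
      · exact hT hiT
      · apply hsF
        rw [chi_apply, if_neg hiT] at hi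
        rw [Finsupp.mem_support_iff]; omega

/-- Adding `∏ i ∈ T, x_i` to a Stanley–Reisner ideal removes the faces containing `T`. Here `𝓖`
is any family generating the complex of the remaining faces. -/
theorem SR_sup_mon {𝓕 𝓖 : Set (Finset (Fin n))} (T : Finset (Fin n))
    (h1 : ∀ G ∈ 𝓖, ¬ T ⊆ G) (h2 : ∀ G ∈ 𝓖, ∃ F ∈ 𝓕, G ⊆ F)
    (h3 : ∀ F ∈ 𝓕, ∀ s ⊆ F, ¬ T ⊆ s → ∃ G ∈ 𝓖, s ⊆ G) :
    SR K 𝓕 ⊔ Ideal.span {mon K T} = SR K 𝓖 := by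
  apply le_antisymm
  · refine sup_le (SR_anti h2) ?_
    rw [Ideal.span_singleton_le_iff_mem]
    exact monomial_mem_SR (by simpa [chi_support] using h1)
  · intro f hf
    rw [f.as_sum]
    refine Ideal.sum_mem _ fun s hs => ?_
    by_cases hT : T ⊆ s.support
    · refine Ideal.mem_sup_right (Ideal.mem_span_singleton.mpr ⟨monomial (s - chi T) (coeff s f), ?_⟩)
      rw [mon, monomial_mul, one_mul, add_tsub_cancel_of_le (chi_le hT)]
    · refine Ideal.mem_sup_left (monomial_mem_SR fun F hF hsF => ?_)
      obtain ⟨G, hG, hsG⟩ := h3 F hF _ hsF hT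
      exact hf s hs G hG hsG

theorem WReg_top {R : Type*} [CommRing R] (rs : List R) (J : Ideal R) (h : J = ⊤) : WReg J rs := by
  induction rs generalizing J with
  | nil => trivial
  | cons y rs ih => exact ⟨fun f _ => h ▸ trivial, ih _ (by rw [h, top_sup_eq])⟩

theorem WReg_SR_empty (rs : List (MvPolynomial (Fin n) K)) : WReg (SR K (∅ : Set (Finset (Fin n)))) rs :=
  WReg_top _ _ (by rw [Ideal.eq_top_iff_one, mem_SR]; simp)

/-- The shelling step: a facet `F` is attached to the complex of `𝓖`, and `T` is the unique minimal
face of `F` that is new. Weak regularity passes from `F` and from `𝓖` to the union. -/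
theorem WReg_SR_insert {𝓖 : Set (Finset (Fin n))} {F : Finset (Fin n)}
    {rs : List (MvPolynomial (Fin n) K)} (T : Finset (Fin n)) (hTF : T ⊆ F)
    (h1 : ∀ G ∈ 𝓖, ¬ T ⊆ G) (h2 : ∀ s ⊆ F, ¬ T ⊆ s → ∃ G ∈ 𝓖, s ⊆ G)
    (hF : WReg (SR K {F}) rs) (h𝓖 : WReg (SR K 𝓖) rs) : WReg (SR K (insert F 𝓖)) rs := by
  refine WReg.shell (mon K T) rs _ (SR K {G | G ∈ insert F 𝓖 ∧ T ⊆ G}) (mon_mul_mem_SR T) ?_ ?_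
  · rw [SR_sup_mon (𝓕 := insert F 𝓖) T h1 (fun G hG => ⟨G, Or.inr hG, subset_rfl⟩)]
    · exact h𝓖
    · rintro G (rfl | hG) s hs hT
      · exact h2 s hs hT
      · exact ⟨G, hG, hs⟩
  · convert hF
    ext G
    constructor
    · rintro ⟨rfl | hG, hT⟩
      · rfl
      · exact absurd hT (h1 G hG)
    · rintro rfl
      exact ⟨Or.inl rfl, hTF⟩

variable (K) in
/-- The sum of the variables whose vertex has colour `t` under the colouring `c`. -/
noncomputable def theta (c : Fin n → ℕ) (t : ℕ) : MvPolynomial (Fin n) K :=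
  ∑ i with c i = t, X i

/-- If each colour in `cs` occurs exactly once on `F`, the forms `theta K c t` restrict to distinct
variables on the polynomial ring of `F`, and so form a regular sequence. -/
theorem WReg_SR_facet (c : Fin n → ℕ) (cs : List ℕ) (hcs : cs.Nodup) (F : Finset (Fin n))
    (h : ∀ t ∈ cs, ∃ i ∈ F, c i = t ∧ ∀ j ∈ F, c j = t → j = i) :
    WReg (SR K {F}) (cs.map (theta K c)) := by
  induction cs generalizing F with
  | nil => trivial
  | cons t cs ih =>
    obtain ⟨i, hiF, hit, hi⟩ := h t (by simp)
    have hdiff : theta K c t - X i ∈ SR K {F} := by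
      rw [theta, ← Finset.sum_erase_eq_sub (by simp [hit])]
      refine Ideal.sum_mem _ fun j hj => X_mem_SR.mpr ?_
      rintro _ rfl hjF
      simp only [Finset.mem_erase, Finset.mem_filter, Finset.mem_univ, true_and] at hj
      exact hj.1 (hi j hjF hj.2)
    refine ⟨fun f hf => ?_, ?_⟩
    · have h1 : mon K {i} * f ∈ SR K {F} := by
        have := Ideal.sub_mem _ hf (Ideal.mul_mem_right f _ hdiff)
        rw [mon_singleton]
        convert this using 1; ring
      rw [← mon_mul_mem_SR] at h1
      refine SR_anti ?_ h1
      rintro _ rfl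
      exact ⟨_, ⟨rfl, by simpa using hiF⟩, subset_rfl⟩
    · have h2 : SR K {F} ⊔ Ideal.span {theta K c t} = SR K {F.erase i} := by
        rw [← SR_sup_mon (K := K) (𝓕 := {F}) (𝓖 := {F.erase i}) {i}, mon_singleton]
        · apply le_antisymm
          · refine sup_le le_sup_left ?_
            rw [Ideal.span_singleton_le_iff_mem, ← sub_add_cancel (theta K c t) (X i)]
            exact Ideal.add_mem _ (Ideal.mem_sup_left hdiff)
              (Ideal.mem_sup_right (Ideal.mem_span_singleton_self _))
          · refine sup_le le_sup_left ?_
            rw [Ideal.span_singleton_le_iff_mem, ← sub_sub_cancel (theta K c t) (X i)]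
            exact Ideal.sub_mem _ (Ideal.mem_sup_right (Ideal.mem_span_singleton_self _))
              (Ideal.mem_sup_left hdiff)
        · rintro _ rfl; simp
        · rintro _ rfl; exact ⟨F, rfl, Finset.erase_subset _ _⟩
        · rintro _ rfl s hs his
          refine ⟨_, rfl, Finset.subset_erase.mpr ⟨hs, by simpa using his⟩⟩
      rw [h2]
      refine ih (List.nodup_cons.mp hcs).2 _ fun t' ht' => ?_
      have htt : t' ≠ t := fun e => (List.nodup_cons.mp hcs).1 (e ▸ ht')
      obtain ⟨j, hjF, hjt, hj⟩ := h t' (by simp [ht'])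
      refine ⟨j, Finset.mem_erase.mpr ⟨?_, hjF⟩, hjt, fun k hk => hj k (Finset.mem_of_mem_erase hk)⟩
      rintro rfl
      exact htt (hjt.symm.trans hit)

variable (K) in
/-- The restriction `K[x_1,…,x_n] → K[x_i : i ∈ F]` that kills the variables outside `F`. -/
noncomputable def restr (F : Finset (Fin n)) : MvPolynomial (Fin n) K →ₐ[K] MvPolynomial F K :=
  aeval fun i => if h : i ∈ F then X ⟨i, h⟩ else 0

theorem restr_rename (F : Finset (Fin n)) (f : MvPolynomial F K) :
    restr K F (rename Subtype.val f) = f := by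
  have : (restr K F).comp (rename Subtype.val) = AlgHom.id K _ := by
    ext i; simp [restr]
  exact DFunLike.congr_fun this f

theorem restr_surjective (F : Finset (Fin n)) : Function.Surjective (restr K F) :=
  fun f => ⟨_, restr_rename F f⟩

theorem ker_restr (F : Finset (Fin n)) : RingHom.ker (restr K F) = SR K {F} := by
  apply le_antisymm
  · intro f hf
    have hh : ((Ideal.Quotient.mkₐ K (SR K {F})).comp (rename Subtype.val)).comp (restr K F)
        = Ideal.Quotient.mkₐ K (SR K {F}) := by
      ext i
      by_cases hi : i ∈ F
      · simp [restr, hi]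
      · have : (X i : MvPolynomial (Fin n) K) ∈ SR K {F} := X_mem_SR.mpr (by simpa using hi)
        simp [restr, hi, Ideal.Quotient.eq_zero_iff_mem.mpr this]
    have h2 := DFunLike.congr_fun hh f
    rw [RingHom.mem_ker] at hf
    simp only [AlgHom.comp_apply, hf, map_zero] at h2
    exact Ideal.Quotient.eq_zero_iff_mem.mp h2.symm
  · intro f hf
    rw [RingHom.mem_ker, f.as_sum, map_sum]
    refine Finset.sum_eq_zero fun s hs => ?_
    have := hf s hs F rfl
    obtain ⟨i, his, hiF⟩ := Finset.not_subset.mp this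
    rw [restr, aeval_monomial, Finsupp.prod, Finset.prod_eq_zero his, mul_zero]
    rw [dif_neg hiF, zero_pow (Finsupp.mem_support_iff.mp his)]

theorem SR_singleton_isPrime (F : Finset (Fin n)) : (SR K {F}).IsPrime := by
  rw [← ker_restr]; exact RingHom.ker_isPrime _

theorem dim_SR_singleton (F : Finset (Fin n)) :
    ringKrullDim (MvPolynomial (Fin n) K ⧸ SR K {F}) = F.card := by
  rw [← ker_restr]
  have := ringKrullDim_eq_of_ringEquiv
    (Ideal.quotientKerAlgEquivOfSurjective (restr_surjective (K := K) F)).toRingEquiv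
  refine this.trans ?_
  rw [MvPolynomial.ringKrullDim_of_isNoetherianRing]
  simp

theorem le_dim_SR {𝓕 : Set (Finset (Fin n))} {F : Finset (Fin n)} (h : ∃ G ∈ 𝓕, F ⊆ G) :
    (F.card : WithBot ℕ∞) ≤ ringKrullDim (MvPolynomial (Fin n) K ⧸ SR K 𝓕) := by
  rw [← dim_SR_singleton (K := K)]
  refine ringKrullDim_le_of_surjective (Ideal.Quotient.factor (SR_anti ?_))
    (Ideal.Quotient.factor_surjective _)
  rintro _ rfl; exact h

/-- The dimension of a Stanley–Reisner ring is at most the largest size of a face, since every prime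
over the ideal contains the prime ideal of some face. -/
theorem dim_SR_le {𝓕 : Set (Finset (Fin n))} {d : ℕ} (h : ∀ F ∈ 𝓕, F.card ≤ d) :
    ringKrullDim (MvPolynomial (Fin n) K ⧸ SR K 𝓕) ≤ d := by
  classical
  rw [ringKrullDim_quotient]
  refine iSup_le fun p => ?_
  -- a prime over the ideal contains the face ideal of some facet
  obtain ⟨F, hF, hle⟩ : ∃ F ∈ 𝓕, SR K {F} ≤ p.head.1.asIdeal := by
    set P := p.head.1.asIdeal with hP
    have hPp : P.IsPrime := p.head.1.isPrime
    have hPle : SR K 𝓕 ≤ P := p.head.2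
    let D : Finset (Fin n) := {i | (X i : MvPolynomial (Fin n) K) ∉ P}
    have hD : mon K D ∉ P := by
      rw [mon, monomial_eq, C_1, one_mul, Finsupp.prod]
      intro hmem
      obtain ⟨i, hi, hiP⟩ := (Ideal.IsPrime.prod_mem_iff).mp hmem
      rw [chi_support] at hi
      exact (Finset.mem_filter.mp hi).2 (hPp.mem_of_pow_mem _ hiP)
    have : ∃ F ∈ 𝓕, D ⊆ F := by
      by_contra! hcon
      exact hD (hPle (monomial_mem_SR (by simpa [chi_support] using hcon)))
    obtain ⟨F, hF, hDF⟩ := this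
    refine ⟨F, hF, fun f hf => ?_⟩
    rw [f.as_sum]
    refine Ideal.sum_mem _ fun s hs => ?_
    obtain ⟨i, his, hiF⟩ := Finset.not_subset.mp (hf s hs F rfl)
    have hiP : (X i : MvPolynomial (Fin n) K) ∈ P := by
      by_contra hcon
      exact hiF (hDF (by simp [D, hcon]))
    rw [monomial_eq, Finsupp.prod]
    refine Ideal.mul_mem_left _ _ (Ideal.mem_of_dvd _ (Finset.dvd_prod_of_mem _ his) ?_)
    exact Ideal.pow_mem_of_mem _ hiP _ (Nat.pos_of_ne_zero (Finsupp.mem_support_iff.mp his))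
  let q : LTSeries (PrimeSpectrum.zeroLocus (R := MvPolynomial (Fin n) K) (SR K {F})) :=
    { length := p.length
      toFun := fun i => ⟨(p i).1, fun f hf => (show p.head.1.asIdeal ≤ (p i).1.asIdeal from
        p.strictMono.monotone (Fin.zero_le i)) (hle hf)⟩
      step := fun i => p.step i }
  have hq := Order.LTSeries.length_le_krullDim q
  rw [← ringKrullDim_quotient, dim_SR_singleton] at hq
  exact hq.trans (by exact_mod_cast h F hF)

theorem span_X_eq_SR :
    Ideal.span (Set.range (X : Fin n → MvPolynomial (Fin n) K)) = SR K {∅} := by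
  ext f
  rw [← Set.image_univ, mem_ideal_span_X_image]
  simp [mem_SR, Finsupp.ext_iff]

/-- If all the faces containing the face `F` lie in `D`, the depth is at most the size of `D`:
multiplication by a variable outside `D` kills the nonzero class of `∏ i ∈ F, x_i`. -/
theorem WReg_SR_length_le {𝓕 : Set (Finset (Fin n))} {F D : Finset (Fin n)}
    (hF : ∃ G ∈ 𝓕, F ⊆ G) (hD : ∀ G ∈ 𝓕, F ⊆ G → G ⊆ D)
    (rs : List (MvPolynomial (Fin n) K)) (hrs : ∀ a ∈ rs, a ∈ SR K {∅})
    (h : WReg (SR K 𝓕) rs) : rs.length ≤ D.card := by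
  have := SR_singleton_isPrime (K := K) (∅ : Finset (Fin n))
  have := WReg.length_le (SR K {∅}) rs hrs (SR K 𝓕) (SR K {D}) (mon K F) ?_ ?_ h
  · rw [dim_SR_singleton] at this
    exact_mod_cast this
  · intro s hs
    rw [mul_comm, ← mon_mul_mem_SR] at hs
    obtain ⟨G, hG, hFG⟩ := hF
    refine SR_anti ?_ hs
    rintro _ rfl
    exact ⟨G, ⟨hG, hFG⟩, Finset.empty_subset _⟩
  · intro a ha
    rw [mul_comm, ← mon_mul_mem_SR]
    refine SR_anti ?_ ha
    rintro G ⟨hG, hFG⟩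
    exact ⟨D, rfl, hD G hG hFG⟩

/-- The Stanley–Reisner ring of a disconnected complex has depth at most one. -/
theorem WReg_SR_length_le_one {𝓕 : Set (Finset (Fin n))} (A B : Finset (Fin n))
    (hAB : Disjoint A B) (hF : ∀ G ∈ 𝓕, G ⊆ A ∨ G ⊆ B) (hA : ∃ G ∈ 𝓕, ∃ i ∈ G, i ∈ A)
    (hB : ∃ G ∈ 𝓕, ∃ i ∈ G, i ∈ B)
    (rs : List (MvPolynomial (Fin n) K)) (hrs : ∀ a ∈ rs, a ∈ SR K {∅})
    (h : WReg (SR K 𝓕) rs) : rs.length ≤ 1 := by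
  have hp := SR_singleton_isPrime (K := K) (∅ : Finset (Fin n))
  refine WReg.length_le_one (SR K {∅}) rs hrs (SR K 𝓕) (SR K {G | G ∈ 𝓕 ∧ G ⊆ B})
    (SR K {G | G ∈ 𝓕 ∧ G ⊆ A}) ?_ ?_ ?_ ?_ ?_ h
  · intro s f hsf
    rw [or_iff_not_imp_right]
    intro hs
    rw [mem_SR_iff_forall] at hsf ⊢
    intro F hF
    refine ((SR_singleton_isPrime F).mem_or_mem (hsf F hF)).resolve_left fun hh => hs ?_
    refine SR_anti ?_ hh
    rintro _ rfl
    exact ⟨F, rfl, Finset.empty_subset _⟩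
  · ext f
    simp only [Ideal.mem_inf]
    constructor
    · rintro ⟨h1, h2⟩ s hs G hG
      rcases hF G hG with h' | h'
      · exact h2 s hs G ⟨hG, h'⟩
      · exact h1 s hs G ⟨hG, h'⟩
    · intro hf
      exact ⟨fun s hs G hG => hf s hs G hG.1, fun s hs G hG => hf s hs G hG.1⟩
  · rw [← span_X_eq_SR, Ideal.span_le]
    rintro _ ⟨i, rfl⟩
    by_cases hi : i ∈ B
    · refine Ideal.mem_sup_right (X_mem_SR.mpr ?_)
      rintro G ⟨-, hG⟩ hiG
      exact Finset.disjoint_left.mp hAB (hG hiG) hi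
    · refine Ideal.mem_sup_left (X_mem_SR.mpr ?_)
      rintro G ⟨-, hG⟩ hiG
      exact hi (hG hiG)
  · obtain ⟨G, hG, i, hiG, hiA⟩ := hA
    intro hle
    refine X_mem_SR.mp (hle (X_mem_SR.mpr ?_)) G hG hiG
    rintro G' ⟨-, hG'⟩ hiG'
    exact Finset.disjoint_left.mp hAB hiA (hG' hiG')
  · obtain ⟨G, hG, i, hiG, hiA⟩ := hB
    intro hle
    refine X_mem_SR.mp (hle (X_mem_SR.mpr ?_)) G hG hiG
    rintro G' ⟨-, hG'⟩ hiG'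
    exact Finset.disjoint_left.mp hAB (hG' hiG') hiA

theorem smDepth_SR_le {𝓕 : Set (Finset (Fin n))} {b : ℕ}
    (h : ∀ rs : List (MvPolynomial (Fin n) K), (∀ a ∈ rs, a ∈ SR K {∅}) →
      WReg (SR K 𝓕) rs → rs.length ≤ b) : smDepth K n (SR K 𝓕) ≤ b := by
  refine csSup_le' ?_
  rintro r ⟨rs, rfl, hrs, hreg⟩
  rw [span_X_eq_SR] at hrs
  exact h rs hrs ((isWeaklyRegular_iff_WReg _ _).mp hreg.1)

/-- A weakly regular sequence whose length is the common size of the facets forces equality of depth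
and dimension. -/
theorem smDepth_SR_eq {𝓕 : Set (Finset (Fin n))} {d : ℕ} (hne : 𝓕.Nonempty)
    (hd : ∀ F ∈ 𝓕, F.card = d) (rs : List (MvPolynomial (Fin n) K)) (hlen : rs.length = d)
    (hrs : ∀ a ∈ rs, a ∈ SR K {∅}) (h : WReg (SR K 𝓕) rs) :
    (smDepth K n (SR K 𝓕) : WithBot ℕ∞) = ringKrullDim (MvPolynomial (Fin n) K ⧸ SR K 𝓕) := by
  obtain ⟨F, hF⟩ := hne
  have hb : ∀ rs : List (MvPolynomial (Fin n) K), (∀ a ∈ rs, a ∈ SR K {∅}) →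
      WReg (SR K 𝓕) rs → rs.length ≤ d := by
    intro rs h1 h2
    rw [← hd F hF]
    refine WReg_SR_length_le ⟨F, hF, subset_rfl⟩ ?_ rs h1 h2
    intro G hG hFG
    rw [Finset.eq_of_subset_of_card_le hFG (by rw [hd F hF, hd G hG])]
  have e1 : smDepth K n (SR K 𝓕) = d := by
    apply le_antisymm (smDepth_SR_le hb)
    refine le_csSup ⟨d, ?_⟩ ⟨rs, hlen, by rwa [span_X_eq_SR], ⟨(isWeaklyRegular_iff_WReg _ _).mpr h, ?_⟩⟩
    · rintro r ⟨rs, rfl, hrs, hreg⟩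
      rw [span_X_eq_SR] at hrs
      exact hb rs hrs ((isWeaklyRegular_iff_WReg _ _).mp hreg.1)
    · -- everything lies over the graded maximal ideal
      intro htop
      have hp := SR_singleton_isPrime (K := K) (∅ : Finset (Fin n))
      have hle : Ideal.ofList rs • (⊤ : Submodule (MvPolynomial (Fin n) K)
          (MvPolynomial (Fin n) K ⧸ SR K 𝓕)) ≤ Submodule.map (SR K 𝓕).mkQ (SR K {∅}) := by
        rw [Submodule.smul_le]
        intro r hr m _
        obtain ⟨g, rfl⟩ := Submodule.Quotient.mk_surjective _ m
        refine ⟨r * g, Ideal.mul_mem_right _ _ ?_, rfl⟩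
        exact (Ideal.span_le.mpr hrs) hr
      rw [← htop] at hle
      obtain ⟨g, hg, hg1⟩ := hle (show Submodule.Quotient.mk 1 ∈ ⊤ from trivial)
      have h1 : g - 1 ∈ SR K 𝓕 := (Submodule.Quotient.eq _).mp hg1
      have h2 : g - 1 ∈ SR K {∅} := SR_anti (by rintro _ rfl; exact ⟨F, hF, by simp⟩) h1
      refine hp.ne_top ((Ideal.eq_top_iff_one _).mpr ?_)
      have := Ideal.sub_mem _ hg h2
      simpa using this
  rw [e1]
  apply le_antisymm
  · rw [← hd F hF]
    exact le_dim_SR ⟨F, hF, subset_rfl⟩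
  · exact dim_SR_le fun F hF => (hd F hF).le

end SR

/-! ### Lexsegment ideals as Stanley–Reisner ideals -/

section EdgeIdeal
variable {K : Type} [Field K] {n : ℕ}

/-- The independence complex of the graph with edges `W`, on the vertices `0,…,n-1`. The pairs in
`W` are numbered from `1`, hence the shift. -/
def Indep (n : ℕ) (W : Set (ℕ × ℕ)) : Set (Finset (Fin n)) :=
  {G | ∀ a ∈ G, ∀ b ∈ G, (a.val + 1, b.val + 1) ∉ W}

/-- An edge ideal is the Stanley–Reisner ideal of the independence complex of its graph. -/
theorem span_eq_SR (W : Set (ℕ × ℕ)) (hW : ∀ w ∈ W, validPair n w) :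
    Ideal.span ((fun w : ℕ × ℕ => xv K n w.1 * xv K n w.2) '' W) = SR K (Indep n W) := by
  have hxv : ∀ a : Fin n, xv K n (a.val + 1) = X a := fun a => by simp [xv]
  apply le_antisymm
  · rw [Ideal.span_le]
    rintro _ ⟨⟨p, q⟩, hw, rfl⟩
    obtain ⟨h1, h2, h3⟩ := hW _ hw
    simp only at h1 h2 h3
    obtain ⟨a, rfl⟩ : ∃ a : Fin n, p = a.val + 1 := ⟨⟨p - 1, by omega⟩, by simp; omega⟩
    obtain ⟨b, rfl⟩ : ∃ b : Fin n, q = b.val + 1 := ⟨⟨q - 1, by omega⟩, by simp; omega⟩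
    simp only [hxv]
    rw [SetLike.mem_coe, ← mon_singleton a, ← mon_mul_mem_SR, X_mem_SR]
    rintro G ⟨hG, haG⟩ hbG
    exact hG a (by simpa using haG) b hbG hw
  · intro f hf
    rw [f.as_sum]
    refine Ideal.sum_mem _ fun s hs => ?_
    have : s.support ∉ Indep n W := fun h => hf s hs _ h subset_rfl
    simp only [Indep, Set.mem_ofPred_eq, not_forall, not_not] at this
    obtain ⟨a, ha, b, hb, hab⟩ := this
    have hne : a ≠ b := by
      rintro rfl
      have := (hW _ hab).2.1
      simp at this
    have hle : Finsupp.single a 1 + Finsupp.single b 1 ≤ s := by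
      intro i
      rw [Finsupp.mem_support_iff] at ha hb
      simp only [Finsupp.add_apply, Finsupp.single_apply]
      split_ifs with h1 h2 h2
      · exact absurd (h1.trans h2.symm) hne
      · subst h1; omega
      · subst h2; omega
      · simp
    rw [← add_tsub_cancel_of_le hle, ← one_mul (coeff _ f), ← monomial_mul, ← one_mul (1 : K),
      ← monomial_mul]
    refine Ideal.mul_mem_right _ _ (Ideal.subset_span ⟨_, hab, ?_⟩)
    simp only [hxv, X]

/-- If all the vertices of `C` are adjacent to the independent set `F`, the depth is at most
`n - |C|`; an independent set `F'` with more elements makes the dimension larger. -/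
theorem not_CM_of_small (W : Set (ℕ × ℕ)) (F C F' : Finset (Fin n))
    (hF : F ∈ Indep n W)
    (hC : ∀ x ∈ C, ∃ f ∈ F, (f.val + 1, x.val + 1) ∈ W ∨ (x.val + 1, f.val + 1) ∈ W)
    (hF' : F' ∈ Indep n W) (hcard : n < C.card + F'.card) :
    (smDepth K n (SR K (Indep n W)) : WithBot ℕ∞) ≠
      ringKrullDim (MvPolynomial (Fin n) K ⧸ SR K (Indep n W)) := by
  intro heq
  have h1 : smDepth K n (SR K (Indep n W)) ≤ (Cᶜ).card := by
    refine smDepth_SR_le fun rs hrs h => WReg_SR_length_le ⟨F, hF, subset_rfl⟩ ?_ rs hrs h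
    intro G hG hFG x hxG
    rw [Finset.mem_compl]
    intro hxC
    obtain ⟨f, hf, h | h⟩ := hC x hxC
    · exact hG f (hFG hf) x hxG h
    · exact hG x hxG f (hFG hf) h
  have h2 := le_dim_SR (K := K) (𝓕 := Indep n W) ⟨F', hF', subset_rfl⟩
  rw [← heq] at h2
  have h3 : F'.card ≤ smDepth K n (SR K (Indep n W)) := by exact_mod_cast h2
  rw [Finset.card_compl, Fintype.card_fin] at h1
  have := Finset.card_le_univ C
  rw [Fintype.card_fin] at this
  omega

/-- A disconnected independence complex of positive dimension is not Cohen–Macaulay. -/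
theorem not_CM_of_disconnected (W : Set (ℕ × ℕ)) (A B F' : Finset (Fin n)) (hAB : Disjoint A B)
    (hF : ∀ G ∈ Indep n W, G ⊆ A ∨ G ⊆ B) (hA : ∃ G ∈ Indep n W, ∃ i ∈ G, i ∈ A)
    (hB : ∃ G ∈ Indep n W, ∃ i ∈ G, i ∈ B)
    (hF' : F' ∈ Indep n W) (hcard : 1 < F'.card) :
    (smDepth K n (SR K (Indep n W)) : WithBot ℕ∞) ≠
      ringKrullDim (MvPolynomial (Fin n) K ⧸ SR K (Indep n W)) := by
  intro heq
  have h1 : smDepth K n (SR K (Indep n W)) ≤ 1 :=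
    smDepth_SR_le fun rs hrs h => WReg_SR_length_le_one A B hAB hF hA hB rs hrs h
  have h2 := le_dim_SR (K := K) (𝓕 := Indep n W) ⟨F', hF', subset_rfl⟩
  rw [← heq] at h2
  have h3 : F'.card ≤ smDepth K n (SR K (Indep n W)) := by exact_mod_cast h2
  omega

/-- Cohen–Macaulayness of a pure complex, witnessed by the colour forms of a colouring for which
every facet has one vertex of each colour. -/
theorem CM_of_shelling (W : Set (ℕ × ℕ)) (𝓕 : Set (Finset (Fin n))) (c : Fin n → ℕ) (cs : List ℕ)
    (h𝓕 : ∀ F ∈ 𝓕, F ∈ Indep n W) (hcov : ∀ G ∈ Indep n W, ∃ F ∈ 𝓕, G ⊆ F)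
    (hne : 𝓕.Nonempty) (hcard : ∀ F ∈ 𝓕, F.card = cs.length)
    (hreg : WReg (SR K 𝓕) (cs.map (theta K c))) :
    (smDepth K n (SR K (Indep n W)) : WithBot ℕ∞) =
      ringKrullDim (MvPolynomial (Fin n) K ⧸ SR K (Indep n W)) := by
  have e : SR K (Indep n W) = SR K 𝓕 :=
    le_antisymm (SR_anti fun F hF => ⟨F, h𝓕 F hF, subset_rfl⟩) (SR_anti hcov)
  rw [e]
  refine smDepth_SR_eq hne hcard _ (by simp) ?_ hreg
  intro a ha
  obtain ⟨t, -, rfl⟩ := List.mem_map.mp ha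
  exact Ideal.sum_mem _ fun i _ => X_mem_SR.mpr (by simp)

/-- The faces `B ∪ {a}` with `a ∈ U`, attached one after the other in any order, shell their union. -/
theorem WReg_star (B U : Finset (Fin n)) (rs : List (MvPolynomial (Fin n) K))
    (hB : ∀ a ∈ U, a ∉ B) (h : ∀ a ∈ U, WReg (SR K {insert a B}) rs) :
    WReg (SR K {F | ∃ a ∈ U, F = insert a B}) rs := by
  induction U using Finset.induction_on with
  | empty => convert WReg_SR_empty (K := K) (n := n) rs; simp
  | insert a U haU ih =>
    have ih' := ih (fun b hb => hB b (by simp [hb])) (fun b hb => h b (by simp [hb]))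
    have e : {F | ∃ b ∈ insert a U, F = insert b B} =
        insert (insert a B) {F | ∃ b ∈ U, F = insert b B} := by
      ext F; simp
    rw [e]
    rcases U.eq_empty_or_nonempty with rfl | ⟨b, hb⟩
    · exact WReg_SR_insert ∅ (by simp) (by simp) (by simp) (h a (by simp)) ih'
    · refine WReg_SR_insert {a} (by simp) ?_ ?_ (h a (by simp)) ih'
      · rintro G ⟨b, hb, rfl⟩ hab
        rw [Finset.singleton_subset_iff, Finset.mem_insert] at hab
        rcases hab with rfl | hab
        · exact haU hb
        · exact hB a (by simp) hab
      · intro s hs has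
        refine ⟨_, ⟨b, hb, rfl⟩, fun x hx => Finset.mem_insert_of_mem ?_⟩
        refine (Finset.mem_insert.mp (hs hx)).resolve_left ?_
        rintro rfl
        exact has (by simpa using hx)

theorem WReg_pair (c : Fin n → ℕ) (p q : Fin n) (hp : c p = 0) (hq : c q = 1) :
    WReg (SR K {{p, q}}) ([0, 1].map (theta K c)) := by
  refine WReg_SR_facet c _ (by simp) _ ?_
  intro t ht
  simp only [List.mem_cons, List.not_mem_nil, or_false] at ht
  rcases ht with rfl | rfl
  · refine ⟨p, by simp, hp, ?_⟩
    simp [hq]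
  · refine ⟨q, by simp, hq, ?_⟩
    simp [hp]

theorem mem_lexSeg {i j k : ℕ} (a b : Fin n) :
    (a.val + 1, b.val + 1) ∈ lexSegSet n (1, i) (j, k) ↔
      a.val < b.val ∧ (0 < a.val ∨ i ≤ b.val + 1) ∧
        (a.val + 1 < j ∨ (a.val + 1 = j ∧ b.val + 1 ≤ k)) := by
  simp only [lexSegSet, validPair, lexGE, Set.mem_ofPred_eq]
  have := b.2
  omega

end EdgeIdeal

/-! ### Lexsegment ideals that are not Cohen–Macaulay -/

section Cases
variable {K : Type} [Field K] {n i j k : ℕ}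

/-- Outside the listed cases the lexsegment ideal is not Cohen–Macaulay. The dimension is bounded
below by the independent set `{j+1,…,n}`, or by an edge of the complement graph when `j = n - 1`. -/
theorem not_CM_numeric (hi2 : 2 ≤ i) (hin : i ≤ n) (hj : 1 ≤ j) (hjk : j < k) (hkn : k ≤ n)
    (huv : 1 < j ∨ (1 = j ∧ i < k)) (h1 : ¬ (i = 2 ∧ j + 1 = n))
    (h2 : ¬ (4 ≤ n ∧ i = n ∧ ((j = 2 ∧ k = 3) ∨ (j + 2 = n ∧ (k + 1 = n ∨ k = n)))))
    (h3 : ¬ (3 ≤ n ∧ i + 1 = n ∧ j + 2 = n ∧ k + 1 = n)) :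
    (smDepth K n (SR K (Indep n (lexSegSet n (1, i) (j, k)))) : WithBot ℕ∞) ≠
      ringKrullDim (MvPolynomial (Fin n) K ⧸ SR K (Indep n (lexSegSet n (1, i) (j, k)))) := by
  -- membership in the independence complex becomes linear arithmetic on vertex numbers
  have hI : ∀ F : Finset (Fin n), (∀ a ∈ F, ∀ b ∈ F, ¬ (a.val < b.val ∧ (0 < a.val ∨ i ≤ b.val + 1) ∧
      (a.val + 1 < j ∨ (a.val + 1 = j ∧ b.val + 1 ≤ k)))) →
      F ∈ Indep n (lexSegSet n (1, i) (j, k)) := by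
    intro F hF a ha b hb
    rw [mem_lexSeg]
    exact hF a ha b hb
  have hsingle : ∀ a : Fin n, {a} ∈ Indep n (lexSegSet n (1, i) (j, k)) := by
    intro a
    refine hI _ fun b hb c hc => ?_
    rw [Finset.mem_singleton] at hb hc
    subst hb hc
    omega
  -- the vertices after the `j`-th one form a face
  have hA : ∀ p q : Fin n, j ≤ p.val → Finset.Icc p q ∈ Indep n (lexSegSet n (1, i) (j, k)) := by
    intro p q hp
    refine hI _ fun a ha b hb => ?_
    simp only [Finset.mem_Icc, Fin.le_def] at ha hb
    omega
  have hcE : ∀ a : Fin n, (Finset.univ.erase a).card = n - 1 := by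
    intro a; rw [Finset.card_erase_of_mem (Finset.mem_univ a), Finset.card_univ, Fintype.card_fin]
  -- a vertex adjacent to all the others
  have hcone : ∀ p : Fin n, (∀ b : Fin n, b.val ≠ p.val →
      (p.val < b.val ∧ (0 < p.val ∨ i ≤ b.val + 1) ∧
        (p.val + 1 < j ∨ (p.val + 1 = j ∧ b.val + 1 ≤ k))) ∨
      (b.val < p.val ∧ (0 < b.val ∨ i ≤ p.val + 1) ∧
        (b.val + 1 < j ∨ (b.val + 1 = j ∧ p.val + 1 ≤ k)))) →
      ∀ F' ∈ Indep n (lexSegSet n (1, i) (j, k)), 1 < F'.card →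
      (smDepth K n (SR K (Indep n (lexSegSet n (1, i) (j, k)))) : WithBot ℕ∞) ≠
      ringKrullDim (MvPolynomial (Fin n) K ⧸ SR K (Indep n (lexSegSet n (1, i) (j, k)))) := by
    intro p hp F' hF' hcard
    refine not_CM_of_small _ {p} (Finset.univ.erase p) F' (hsingle p) ?_ hF' ?_
    · intro x hx
      refine ⟨p, by simp, ?_⟩
      rw [mem_lexSeg, mem_lexSeg]
      exact hp x fun h => (Finset.mem_erase.mp hx).1 (Fin.ext h)
    · rw [hcE]; omega
  have hcA : 0 < n - j → ∀ h : j < n, ∀ h' : n - 1 < n,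
      (Finset.Icc (⟨j, h⟩ : Fin n) ⟨n - 1, h'⟩).card = n - j := by
    intro _ h h'
    rw [Fin.card_Icc]; simp only; omega
  have hpair : ∀ p q : Fin n, p.val < q.val → ({p, q} : Finset (Fin n)).card = 2 := by
    intro p q hpq
    refine Finset.card_pair ?_
    rintro rfl
    omega
  have hpairI : ∀ p q : Fin n, p.val < q.val → ¬ ((0 < p.val ∨ i ≤ q.val + 1) ∧
      (p.val + 1 < j ∨ (p.val + 1 = j ∧ q.val + 1 ≤ k))) →
      {p, q} ∈ Indep n (lexSegSet n (1, i) (j, k)) := by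
    intro p q hpq h
    refine hI _ fun a ha b hb => ?_
    simp only [Finset.mem_insert, Finset.mem_singleton] at ha hb
    rcases ha with rfl | rfl <;> rcases hb with rfl | rfl <;> omega
  -- vertices are numbered from `0` as elements of `Fin n`, but `i`, `j`, `k` count from `1`
  rcases Nat.lt_or_ge j 2 with hj1 | hj2
  · obtain rfl : j = 1 := by omega
    refine not_CM_of_small _ {⟨0, by omega⟩} (Finset.Icc ⟨i - 1, by omega⟩ ⟨k - 1, by omega⟩)
      (Finset.Icc ⟨1, by omega⟩ ⟨n - 1, by omega⟩) (hsingle _) ?_ (hA _ _ le_rfl) ?_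
    · intro x hx
      simp only [Finset.mem_Icc, Fin.le_def] at hx
      refine ⟨⟨0, by omega⟩, by simp, ?_⟩
      rw [mem_lexSeg, mem_lexSeg]
      simp only [true_and]
      omega
    · rw [Fin.card_Icc, Fin.card_Icc]; simp only; omega
  rcases eq_or_ne (j + 1) n with hjn | hjn
  · refine hcone ⟨n - 1, by omega⟩ ?_ {⟨0, by omega⟩, ⟨1, by omega⟩} ?_ ?_
    · intro b hb
      simp only at hb ⊢
      omega
    · refine hpairI _ _ ?_ ?_ <;> simp only <;> omega
    · rw [hpair] <;> simp
  have hAc : (Finset.Icc (⟨j, by omega⟩ : Fin n) ⟨n - 1, by omega⟩).card = n - j :=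
    hcA (by omega) _ _
  have hAI := hA ⟨j, by omega⟩ ⟨n - 1, by omega⟩ le_rfl
  rcases Nat.lt_or_ge 2 j with hj3 | hj3
  · rcases Nat.lt_or_ge 2 (n - j) with hn3 | hn3
    · refine not_CM_of_small _ {⟨1, by omega⟩} (Finset.Icc ⟨2, by omega⟩ ⟨n - 1, by omega⟩)
        _ (hsingle _) ?_ hAI ?_
      · intro x hx
        simp only [Finset.mem_Icc, Fin.le_def] at hx
        refine ⟨⟨1, by omega⟩, by simp, ?_⟩
        rw [mem_lexSeg, mem_lexSeg]
        simp only
        omega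
      · rw [hAc, Fin.card_Icc]; simp only; omega
    · rcases Nat.lt_or_ge i j with hij | hij
      · refine hcone ⟨i - 1, by omega⟩ ?_ _ hAI (by omega)
        intro b hb
        simp only at hb ⊢
        omega
      rcases eq_or_ne i j with hij' | hij'
      · rcases eq_or_ne k n with hk | hk
        · refine hcone ⟨i - 1, by omega⟩ ?_ _ hAI (by omega)
          intro b hb
          simp only at hb ⊢
          omega
        · refine not_CM_of_disconnected _ (Finset.Icc ⟨0, by omega⟩ ⟨n - 4, by omega⟩)
            (Finset.Icc ⟨n - 3, by omega⟩ ⟨n - 1, by omega⟩) _ ?_ ?_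
            ⟨_, hsingle ⟨0, by omega⟩, ⟨0, by omega⟩, by simp⟩
            ⟨_, hsingle ⟨n - 1, by omega⟩, ⟨n - 1, by omega⟩, by simp; omega⟩ hAI (by omega)
          · rw [Finset.disjoint_left]
            intro a ha hb
            simp only [Finset.mem_Icc, Fin.le_def] at ha hb
            omega
          · intro G hG
            by_contra! hcon
            obtain ⟨a, ha, ha'⟩ := Finset.not_subset.mp hcon.1
            obtain ⟨b, hb, hb'⟩ := Finset.not_subset.mp hcon.2
            have := hG b hb a ha
            rw [mem_lexSeg] at this
            simp only [Finset.mem_Icc, Fin.le_def] at ha' hb'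
            omega
      · refine not_CM_of_disconnected _ (Finset.Icc ⟨0, by omega⟩ ⟨n - 3, by omega⟩)
            (Finset.Icc ⟨n - 2, by omega⟩ ⟨n - 1, by omega⟩) _ ?_ ?_
            ⟨_, hsingle ⟨0, by omega⟩, ⟨0, by omega⟩, by simp⟩
            ⟨_, hsingle ⟨n - 1, by omega⟩, ⟨n - 1, by omega⟩, by simp; omega⟩ hAI (by omega)
        · rw [Finset.disjoint_left]
          intro a ha hb
          simp only [Finset.mem_Icc, Fin.le_def] at ha hb
          omega
        · intro G hG
          by_contra! hcon
          obtain ⟨a, ha, ha'⟩ := Finset.not_subset.mp hcon.1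
          obtain ⟨b, hb, hb'⟩ := Finset.not_subset.mp hcon.2
          have := hG b hb a ha
          rw [mem_lexSeg] at this
          simp only [Finset.mem_Icc, Fin.le_def] at ha' hb'
          omega
  obtain rfl : j = 2 := by omega
  rcases eq_or_ne i 2 with hi | hi
  · refine hcone ⟨0, by omega⟩ ?_ _ hAI (by omega)
    intro b hb
    simp only at hb ⊢
    omega
  rcases eq_or_ne i 3 with hi3 | hi3
  · rcases eq_or_ne n 4 with hn | hn
    · refine not_CM_of_disconnected _ (Finset.Icc ⟨0, by omega⟩ ⟨1, by omega⟩)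
            (Finset.Icc ⟨2, by omega⟩ ⟨n - 1, by omega⟩) _ ?_ ?_
            ⟨_, hsingle ⟨0, by omega⟩, ⟨0, by omega⟩, by simp⟩
            ⟨_, hsingle ⟨n - 1, by omega⟩, ⟨n - 1, by omega⟩, by simp; omega⟩ hAI (by omega)
      · rw [Finset.disjoint_left]
        intro a ha hb
        simp only [Finset.mem_Icc, Fin.le_def] at ha hb
        omega
      · intro G hG
        by_contra! hcon
        obtain ⟨a, ha, ha'⟩ := Finset.not_subset.mp hcon.1
        obtain ⟨b, hb, hb'⟩ := Finset.not_subset.mp hcon.2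
        have := hG b hb a ha
        rw [mem_lexSeg] at this
        simp only [Finset.mem_Icc, Fin.le_def] at ha' hb'
        omega
    · refine not_CM_of_small _ {⟨0, by omega⟩} (Finset.Icc ⟨2, by omega⟩ ⟨n - 1, by omega⟩)
        _ (hsingle _) ?_ hAI ?_
      · intro x hx
        simp only [Finset.mem_Icc, Fin.le_def] at hx
        refine ⟨⟨0, by omega⟩, by simp, ?_⟩
        rw [mem_lexSeg, mem_lexSeg]
        simp only
        omega
      · rw [hAc]; omega
  rcases Nat.lt_or_ge i n with hin' | hin'
  · refine not_CM_of_small _ {⟨0, by omega⟩, ⟨2, by omega⟩}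
      (insert ⟨1, by omega⟩ (Finset.Icc ⟨i - 1, by omega⟩ ⟨n - 1, by omega⟩))
      _ (hpairI _ _ ?_ ?_) ?_ hAI ?_
    · simp
    · simp only; omega
    · intro x hx
      simp only [Finset.mem_insert, Finset.mem_Icc, Fin.le_def, Fin.ext_iff] at hx
      rcases hx with hx | hx
      · refine ⟨⟨2, by omega⟩, by simp, ?_⟩
        rw [mem_lexSeg, mem_lexSeg]
        simp only
        omega
      · refine ⟨⟨0, by omega⟩, by simp, ?_⟩
        rw [mem_lexSeg, mem_lexSeg]
        simp only
        omega
    · rw [hAc, Finset.card_insert_of_notMem, Fin.card_Icc]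
      · simp only; omega
      · simp only [Finset.mem_Icc, Fin.le_def]; omega
  rcases eq_or_ne k n with hk | hk
  · refine not_CM_of_small _ {⟨1, by omega⟩} (Finset.Icc ⟨2, by omega⟩ ⟨n - 1, by omega⟩)
        _ (hsingle _) ?_ hAI ?_
    · intro x hx
      simp only [Finset.mem_Icc, Fin.le_def] at hx
      refine ⟨⟨1, by omega⟩, by simp, ?_⟩
      rw [mem_lexSeg, mem_lexSeg]
      simp only [true_and]
      omega
    · rw [hAc]; omega
  · refine not_CM_of_small _ {⟨1, by omega⟩, ⟨n - 1, by omega⟩}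
      (insert ⟨0, by omega⟩ (Finset.Icc ⟨2, by omega⟩ ⟨k - 1, by omega⟩))
      _ (hpairI _ _ ?_ ?_) ?_ hAI ?_
    · simp only; omega
    · simp only; omega
    · intro x hx
      simp only [Finset.mem_insert, Finset.mem_Icc, Fin.le_def, Fin.ext_iff] at hx
      rcases hx with hx | hx
      · refine ⟨⟨n - 1, by omega⟩, by simp, ?_⟩
        rw [mem_lexSeg, mem_lexSeg]
        simp only
        omega
      · refine ⟨⟨1, by omega⟩, by simp, ?_⟩
        rw [mem_lexSeg, mem_lexSeg]
        simp only [true_and]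
        omega
    · rw [hAc, Finset.card_insert_of_notMem, Fin.card_Icc]
      · simp only; omega
      · simp only [Finset.mem_Icc, Fin.le_def]; omega

end Cases

/-! ### Lexsegment ideals that are Cohen–Macaulay -/

section CM
variable {K : Type} [Field K] {n i j k : ℕ}

/-- For the complete graph the facets of the independence complex are the single vertices. -/
theorem CM_complete (hn : 2 ≤ n) :
    (smDepth K n (SR K (Indep n {w | validPair n w})) : WithBot ℕ∞) =
      ringKrullDim (MvPolynomial (Fin n) K ⧸ SR K (Indep n {w | validPair n w})) := by
  refine CM_of_shelling _ {F | ∃ a ∈ Finset.univ, F = insert a ∅} (fun _ => 0) [0] ?_ ?_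
    ⟨_, ⟨⟨0, by omega⟩, Finset.mem_univ _, rfl⟩⟩ ?_ (WReg_star ∅ _ _ (by simp) ?_)
  · rintro _ ⟨a, -, rfl⟩ b hb c hc
    simp only [insert_empty_eq, Finset.mem_singleton] at hb hc
    subst hb hc
    simp [validPair]
  · intro G hG
    rcases G.eq_empty_or_nonempty with rfl | ⟨a, ha⟩
    · exact ⟨_, ⟨⟨0, by omega⟩, Finset.mem_univ _, rfl⟩, by simp⟩
    · refine ⟨_, ⟨a, Finset.mem_univ _, rfl⟩, fun b hb => ?_⟩
      have h1 := hG a ha b hb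
      have h2 := hG b hb a ha
      simp only [validPair, Set.mem_ofPred_eq] at h1 h2
      simp only [insert_empty_eq, Finset.mem_singleton, Fin.ext_iff]
      omega
  · rintro _ ⟨a, -, rfl⟩; simp
  · intro a _
    exact WReg_SR_facet _ _ (by simp) _ (by simp)

/-- Membership in the independence complex of a lexsegment, as arithmetic on vertex numbers. -/
theorem mem_Indep_lexSeg {F : Finset (Fin n)} :
    F ∈ Indep n (lexSegSet n (1, i) (j, k)) ↔ ∀ a ∈ F, ∀ b ∈ F,
      ¬ (a.val < b.val ∧ (0 < a.val ∨ i ≤ b.val + 1) ∧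
        (a.val + 1 < j ∨ (a.val + 1 = j ∧ b.val + 1 ≤ k))) := by
  simp only [Indep, Set.mem_ofPred_eq, mem_lexSeg]

theorem pair_mem_Indep {p q : Fin n} (hpq : p.val < q.val) :
    {p, q} ∈ Indep n (lexSegSet n (1, i) (j, k)) ↔ ¬ ((0 < p.val ∨ i ≤ q.val + 1) ∧
      (p.val + 1 < j ∨ (p.val + 1 = j ∧ q.val + 1 ≤ k))) := by
  rw [mem_Indep_lexSeg]
  constructor
  · intro h h'
    exact h p (by simp) q (by simp) ⟨hpq, h'⟩
  · intro h a ha b hb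
    simp only [Finset.mem_insert, Finset.mem_singleton] at ha hb
    rcases ha with rfl | rfl <;> rcases hb with rfl | rfl <;> omega

/-- For `u = x_1 x_n` and `v = x_2 x_3` the graph consists of the two disjoint edges `{1, n}` and `{2, 3}`,
so the facets are the complements of the four sets `{x, y}` with `x ∈ {1, n}` and `y ∈ {2, 3}`. -/
theorem CM_two_three (hn : 4 ≤ n) :
    (smDepth K n (SR K (Indep n (lexSegSet n (1, n) (2, 3)))) : WithBot ℕ∞) =
      ringKrullDim (MvPolynomial (Fin n) K ⧸ SR K (Indep n (lexSegSet n (1, n) (2, 3)))) := by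
  set z : Fin n := ⟨0, by omega⟩ with hz
  set o : Fin n := ⟨1, by omega⟩ with ho
  set t : Fin n := ⟨2, by omega⟩ with ht
  set l : Fin n := ⟨n - 1, by omega⟩ with hl
  have hzl : z ≠ l := by simp only [hz, hl, ne_eq, Fin.ext_iff]; omega
  have hzo : z ≠ o := by simp [hz, ho]
  have hzt : z ≠ t := by simp [hz, ht]
  have hot : o ≠ t := by simp [ho, ht]
  have hol : o ≠ l := by simp only [ho, hl, ne_eq, Fin.ext_iff]; omega
  have htl : t ≠ l := by simp only [ht, hl, ne_eq, Fin.ext_iff]; omega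
  let P : Fin n → Fin n → Finset (Fin n) := fun x y => (Finset.univ.erase x).erase y
  have hP : ∀ x y a, a ∈ P x y ↔ a ≠ y ∧ a ≠ x := by simp [P]
  let c : Fin n → ℕ := fun v =>
    if v.val = 0 ∨ v.val = n - 1 then 0 else if v.val ≤ 2 then 1 else v.val - 1
  have hsub : ∀ x y (G : Finset (Fin n)), x ∉ G → y ∉ G → G ⊆ P x y := by
    intro x y G hx hy a ha
    rw [hP]
    exact ⟨fun e => hy (e ▸ ha), fun e => hx (e ▸ ha)⟩
  have hfacet : ∀ x ∈ ({z, l} : Finset (Fin n)), ∀ y ∈ ({o, t} : Finset (Fin n)),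
      WReg (SR K {P x y}) ((List.range (n - 2)).map (theta K c)) := by
    intro x hx y hy
    refine WReg_SR_facet c _ List.nodup_range _ ?_
    intro s hs
    rw [List.mem_range] at hs
    simp only [Finset.mem_insert, Finset.mem_singleton, Fin.ext_iff, hz, hl, ho, ht] at hx hy
    rcases Nat.lt_or_ge s 2 with h2 | h2
    · obtain rfl | rfl : s = 0 ∨ s = 1 := by omega
      · refine ⟨⟨n - 1 - x.val, by omega⟩, ?_, ?_, ?_⟩
        · rw [hP]; simp only [ne_eq, Fin.ext_iff]; omega
        · simp only [c]; split_ifs <;> omega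
        · intro a ha hca
          rw [hP] at ha
          simp only [c] at hca
          simp only [ne_eq, Fin.ext_iff] at ha ⊢
          split_ifs at hca <;> omega
      · refine ⟨⟨3 - y.val, by omega⟩, ?_, ?_, ?_⟩
        · rw [hP]; simp only [ne_eq, Fin.ext_iff]; omega
        · simp only [c]; split_ifs <;> omega
        · intro a ha hca
          rw [hP] at ha
          simp only [c] at hca
          simp only [ne_eq, Fin.ext_iff] at ha ⊢
          split_ifs at hca <;> omega
    · refine ⟨⟨s + 1, by omega⟩, ?_, ?_, ?_⟩
      · rw [hP]; simp only [ne_eq, Fin.ext_iff]; omega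
      · simp only [c]; rw [if_neg (by omega), if_neg (by omega)]; omega
      · intro a ha hca
        rw [hP] at ha
        simp only [c] at hca
        simp only [ne_eq, Fin.ext_iff] at ha ⊢
        split_ifs at hca <;> omega
  refine CM_of_shelling _ (insert (P z o) (insert (P l o) (insert (P z t) (insert (P l t) ∅))))
    c (List.range (n - 2)) ?_ ?_ ⟨_, Or.inl rfl⟩ ?_ ?_
  · have : ∀ x ∈ ({z, l} : Finset (Fin n)), ∀ y ∈ ({o, t} : Finset (Fin n)),
        P x y ∈ Indep n (lexSegSet n (1, n) (2, 3)) := by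
      intro x hx y hy
      rw [mem_Indep_lexSeg]
      intro a ha b hb
      rw [hP] at ha hb
      simp only [Finset.mem_insert, Finset.mem_singleton, ne_eq, Fin.ext_iff, hz, hl, ho, ht]
        at hx hy ha hb
      omega
    rintro F (rfl | rfl | rfl | rfl | h)
    · exact this _ (by simp) _ (by simp)
    · exact this _ (by simp) _ (by simp)
    · exact this _ (by simp) _ (by simp)
    · exact this _ (by simp) _ (by simp)
    · exact absurd h (by simp)
  · intro G hG
    rw [mem_Indep_lexSeg] at hG
    have h1 : z ∉ G ∨ l ∉ G := by
      by_contra! h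
      refine hG z h.1 l h.2 ?_
      simp only [hz, hl]; omega
    have h2 : o ∉ G ∨ t ∉ G := by
      by_contra! h
      refine hG o h.1 t h.2 ?_
      simp [ho, ht]
    rcases h1 with h1 | h1 <;> rcases h2 with h2 | h2 <;>
      exact ⟨_, by simp, hsub _ _ G h1 h2⟩
  · have : ∀ x y : Fin n, x ≠ y → (P x y).card = (List.range (n - 2)).length := by
      intro x y hxy
      rw [Finset.card_erase_of_mem (by simpa using hxy.symm),
        Finset.card_erase_of_mem (Finset.mem_univ _), Finset.card_univ, Fintype.card_fin,
        List.length_range]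
      omega
    rintro F (rfl | rfl | rfl | rfl | h)
    · exact this _ _ hzo
    · exact this _ _ hol.symm
    · exact this _ _ hzt
    · exact this _ _ htl.symm
    · exact absurd h (by simp)
  · refine WReg_SR_insert {l, t} ?_ ?_ ?_ (hfacet _ (by simp) _ (by simp)) ?_
    · intro a; simp only [hP, Finset.mem_insert, Finset.mem_singleton]
      rintro (rfl | rfl)
      · exact ⟨hol.symm, hzl.symm⟩
      · exact ⟨hot.symm, hzt.symm⟩
    · rintro G (rfl | rfl | rfl | h)
      all_goals first | exact absurd h (by simp) | simp [Finset.insert_subset_iff, hP]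
    · intro s hs hT
      simp only [Finset.insert_subset_iff, Finset.singleton_subset_iff, not_and_or] at hT
      have hzs : z ∉ s := fun h => ((hP _ _ _).mp (hs h)).2 rfl
      have hos : o ∉ s := fun h => ((hP _ _ _).mp (hs h)).1 rfl
      rcases hT with hT | hT
      · exact ⟨P l o, by simp, hsub _ _ _ hT hos⟩
      · exact ⟨P z t, by simp, hsub _ _ _ hzs hT⟩
    refine WReg_SR_insert {t} ?_ ?_ ?_ (hfacet _ (by simp) _ (by simp)) ?_
    · simpa [hP] using ⟨hot.symm, htl⟩
    · rintro G (rfl | rfl | h)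
      all_goals first | exact absurd h (by simp) | simp [hP]
    · intro s hs hT
      rw [Finset.singleton_subset_iff] at hT
      exact ⟨P l t, by simp, hsub _ _ _ (fun h => ((hP _ _ _).mp (hs h)).2 rfl) hT⟩
    refine WReg_SR_insert {l} ?_ ?_ ?_ (hfacet _ (by simp) _ (by simp)) ?_
    · simpa [hP] using ⟨htl.symm, hzl.symm⟩
    · rintro G (rfl | h)
      all_goals first | exact absurd h (by simp) | simp [hP]
    · intro s hs hT
      rw [Finset.singleton_subset_iff] at hT
      exact ⟨P l t, by simp, hsub _ _ _ hT (fun h => ((hP _ _ _).mp (hs h)).1 rfl)⟩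
    exact WReg_SR_insert ∅ (by simp) (by simp) (by simp) (hfacet _ (by simp) _ (by simp))
      (WReg_SR_empty _)

end CM

section CMDimTwo
variable {K : Type} [Field K] {n i : ℕ}

/-- For `v = x_{n-2} x_{n-1}` and `u = x_1 x_n` or `u = x_1 x_{n-1}` the independence complex is a
connected graph: the star at `1` with leaves `2,…,i-1`, and the edges `{n-2, n}`, `{n-1, n}`. -/
theorem CM_dim_two_a (hn : 4 ≤ n) (hi : i = n ∨ i + 1 = n) :
    (smDepth K n (SR K (Indep n (lexSegSet n (1, i) (n - 2, n - 1)))) : WithBot ℕ∞) =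
      ringKrullDim
        (MvPolynomial (Fin n) K ⧸ SR K (Indep n (lexSegSet n (1, i) (n - 2, n - 1)))) := by
  let z : Fin n := ⟨0, by omega⟩
  let p : Fin n := ⟨n - 3, by omega⟩
  let q : Fin n := ⟨n - 2, by omega⟩
  let l : Fin n := ⟨n - 1, by omega⟩
  have hz : z.val = 0 := rfl
  have hp : p.val = n - 3 := rfl
  have hq : q.val = n - 2 := rfl
  have hl : l.val = n - 1 := rfl
  clear_value z p q l
  let U : Finset (Fin n) := {a | 0 < a.val ∧ a.val + 1 < i}
  have hU : ∀ a, a ∈ U ↔ 0 < a.val ∧ a.val + 1 < i := by simp [U]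
  clear_value U
  let c : Fin n → ℕ := fun v => if v.val = 0 ∨ v.val = n - 1 then 0 else 1
  have hc0 : ∀ v, v.val = 0 ∨ v.val = n - 1 → c v = 0 := fun v hv => if_pos hv
  have hc1 : ∀ v, ¬ (v.val = 0 ∨ v.val = n - 1) → c v = 1 := fun v hv => if_neg hv
  clear_value c
  have hpU : p ∈ U := by rw [hU]; omega
  have hstar : ∀ a ∈ U, insert a {z} = ({z, a} : Finset (Fin n)) := fun a _ => Finset.pair_comm _ _
  refine CM_of_shelling _ (insert {l, q} (insert {l, p} {F | ∃ a ∈ U, F = insert a {z}})) c [0, 1]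
    ?_ ?_ ⟨_, Or.inl rfl⟩ ?_ ?_
  · rintro F (rfl | rfl | ⟨a, ha, rfl⟩)
    · rw [Finset.pair_comm, pair_mem_Indep] <;> omega
    · rw [Finset.pair_comm, pair_mem_Indep] <;> omega
    · rw [hstar a ha]
      rw [hU] at ha
      rw [pair_mem_Indep] <;> omega
  · intro G hG
    rw [mem_Indep_lexSeg] at hG
    by_cases hlG : l ∈ G
    · by_cases hqG : q ∈ G
      · refine ⟨_, Or.inl rfl, fun a ha => ?_⟩
        have h1 := hG a ha l hlG
        have h2 := hG a ha q hqG
        simp only [Finset.mem_insert, Finset.mem_singleton, Fin.ext_iff]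
        omega
      · refine ⟨_, Or.inr (Or.inl rfl), fun a ha => ?_⟩
        have h1 := hG a ha l hlG
        have h2 : a.val ≠ q.val := fun h => hqG (Fin.ext h ▸ ha)
        simp only [Finset.mem_insert, Finset.mem_singleton, Fin.ext_iff]
        omega
    · have hlt : ∀ a ∈ G, a.val < n - 1 := by
        intro a ha
        have : a.val ≠ l.val := fun h => hlG (Fin.ext h ▸ ha)
        omega
      by_cases hG' : ∃ a ∈ G, a ≠ z
      · obtain ⟨a, ha, haz⟩ := hG'
        rw [ne_eq, Fin.ext_iff] at haz
        have := hlt a ha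
        by_cases haU : a ∈ U
        · refine ⟨_, Or.inr (Or.inr ⟨a, haU, rfl⟩), fun b hb => ?_⟩
          have h1 := hG a ha b hb
          have h2 := hG b hb a ha
          have := hlt b hb
          simp only [Finset.mem_insert, Finset.mem_singleton, Fin.ext_iff]
          omega
        · refine ⟨_, Or.inl rfl, fun b hb => ?_⟩
          rw [hU] at haU
          have h1 := hG a ha b hb
          have h2 := hG b hb a ha
          have := hlt b hb
          simp only [Finset.mem_insert, Finset.mem_singleton, Fin.ext_iff]
          omega
      · push Not at hG'
        refine ⟨_, Or.inr (Or.inr ⟨p, hpU, rfl⟩), fun b hb => ?_⟩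
        rw [hG' b hb]
        simp
  · have : ∀ a b : Fin n, a.val ≠ b.val → ({a, b} : Finset (Fin n)).card = [0, 1].length := by
      intro a b hab
      rw [Finset.card_pair fun h => hab (congrArg _ h)]
      rfl
    rintro F (rfl | rfl | ⟨a, ha, rfl⟩)
    · exact this _ _ (by omega)
    · exact this _ _ (by omega)
    · rw [hstar a ha]
      rw [hU] at ha
      exact this _ _ (by omega)
  · have h1 : WReg (SR K (insert {l, p} {F | ∃ a ∈ U, F = insert a {z}}))
        ([0, 1].map (theta K c)) := by
      refine WReg_SR_insert {l} (by simp) ?_ ?_ (WReg_pair c _ _ (hc0 _ (by omega))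
        (hc1 _ (by omega))) (WReg_star _ _ _ ?_ ?_)
      · rintro G ⟨a, ha, rfl⟩
        rw [hU] at ha
        simp only [Finset.singleton_subset_iff, Finset.mem_insert, Finset.mem_singleton,
          Fin.ext_iff]
        omega
      · intro s hs hT
        refine ⟨_, ⟨p, hpU, rfl⟩, fun x hx => ?_⟩
        have h1 := hs hx
        simp only [Finset.mem_insert, Finset.mem_singleton] at h1 ⊢
        refine Or.inl (h1.resolve_left ?_)
        rintro rfl
        exact hT (by simpa using hx)
      · intro a ha
        rw [hU] at ha
        simp only [Finset.mem_singleton, Fin.ext_iff]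
        omega
      · intro a ha
        rw [hstar a ha]
        rw [hU] at ha
        exact WReg_pair c _ _ (hc0 _ (by omega)) (hc1 _ (by omega))
    have hlq : WReg (SR K {{l, q}}) ([0, 1].map (theta K c)) :=
      WReg_pair c _ _ (hc0 _ (by omega)) (hc1 _ (by omega))
    by_cases hqU : q ∈ U
    · refine WReg_SR_insert {l, q} subset_rfl ?_ ?_ hlq h1
      · rintro G (rfl | ⟨a, ha, rfl⟩)
        · simp only [Finset.insert_subset_iff, Finset.singleton_subset_iff, Finset.mem_insert,
            Finset.mem_singleton, Fin.ext_iff]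
          omega
        · rw [hU] at ha
          simp only [Finset.insert_subset_iff, Finset.singleton_subset_iff, Finset.mem_insert,
            Finset.mem_singleton, Fin.ext_iff]
          omega
      · intro s hs hT
        simp only [Finset.insert_subset_iff, Finset.singleton_subset_iff, not_and_or] at hT
        rcases hT with hT | hT
        · refine ⟨_, Or.inr ⟨q, hqU, rfl⟩, fun x hx => ?_⟩
          have h1 := hs hx
          simp only [Finset.mem_insert, Finset.mem_singleton] at h1 ⊢
          refine Or.inl (h1.resolve_left ?_)
          rintro rfl
          exact hT hx
        · refine ⟨_, Or.inl rfl, fun x hx => ?_⟩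
          have h1 := hs hx
          simp only [Finset.mem_insert, Finset.mem_singleton] at h1 ⊢
          refine Or.inl (h1.resolve_right ?_)
          rintro rfl
          exact hT hx
    · refine WReg_SR_insert {q} (by simp) ?_ ?_ hlq h1
      · rintro G (rfl | ⟨a, ha, rfl⟩)
        · simp only [Finset.singleton_subset_iff, Finset.mem_insert,
            Finset.mem_singleton, Fin.ext_iff]
          omega
        · rw [hU] at ha hqU
          simp only [Finset.singleton_subset_iff, Finset.mem_insert,
            Finset.mem_singleton, Fin.ext_iff]
          omega
      · intro s hs hT
        rw [Finset.singleton_subset_iff] at hT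
        refine ⟨_, Or.inl rfl, fun x hx => ?_⟩
        have h1 := hs hx
        simp only [Finset.mem_insert, Finset.mem_singleton] at h1 ⊢
        refine Or.inl (h1.resolve_right ?_)
        rintro rfl
        exact hT hx

/-- For `u = x_1 x_n` and `v = x_{n-2} x_n` the independence complex is a connected graph: the star
at `1` with leaves `2,…,n-1`, and the edge `{n-1, n}`. -/
theorem CM_dim_two_b (hn : 4 ≤ n) :
    (smDepth K n (SR K (Indep n (lexSegSet n (1, n) (n - 2, n)))) : WithBot ℕ∞) =
      ringKrullDim
        (MvPolynomial (Fin n) K ⧸ SR K (Indep n (lexSegSet n (1, n) (n - 2, n)))) := by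
  let z : Fin n := ⟨0, by omega⟩
  let q : Fin n := ⟨n - 2, by omega⟩
  let l : Fin n := ⟨n - 1, by omega⟩
  have hz : z.val = 0 := rfl
  have hq : q.val = n - 2 := rfl
  have hl : l.val = n - 1 := rfl
  clear_value z q l
  let U : Finset (Fin n) := {a | 0 < a.val ∧ a.val + 1 < n}
  have hU : ∀ a, a ∈ U ↔ 0 < a.val ∧ a.val + 1 < n := by simp [U]
  clear_value U
  let c : Fin n → ℕ := fun v => if v.val = 0 ∨ v.val = n - 1 then 0 else 1
  have hc0 : ∀ v, v.val = 0 ∨ v.val = n - 1 → c v = 0 := fun v hv => if_pos hv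
  have hc1 : ∀ v, ¬ (v.val = 0 ∨ v.val = n - 1) → c v = 1 := fun v hv => if_neg hv
  clear_value c
  have hqU : q ∈ U := by rw [hU]; omega
  have hstar : ∀ a ∈ U, insert a {z} = ({z, a} : Finset (Fin n)) := fun a _ => Finset.pair_comm _ _
  refine CM_of_shelling _ (insert {l, q} {F | ∃ a ∈ U, F = insert a {z}}) c [0, 1]
    ?_ ?_ ⟨_, Or.inl rfl⟩ ?_ ?_
  · rintro F (rfl | ⟨a, ha, rfl⟩)
    · rw [Finset.pair_comm, pair_mem_Indep] <;> omega
    · rw [hstar a ha]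
      rw [hU] at ha
      rw [pair_mem_Indep] <;> omega
  · intro G hG
    rw [mem_Indep_lexSeg] at hG
    by_cases hlG : l ∈ G
    · refine ⟨_, Or.inl rfl, fun a ha => ?_⟩
      have h1 := hG a ha l hlG
      simp only [Finset.mem_insert, Finset.mem_singleton, Fin.ext_iff]
      omega
    · have hlt : ∀ a ∈ G, a.val < n - 1 := by
        intro a ha
        have : a.val ≠ l.val := fun h => hlG (Fin.ext h ▸ ha)
        omega
      by_cases hG' : ∃ a ∈ G, a ≠ z
      · obtain ⟨a, ha, haz⟩ := hG'
        rw [ne_eq, Fin.ext_iff] at haz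
        have := hlt a ha
        refine ⟨_, Or.inr ⟨a, (hU a).mpr (by omega), rfl⟩, fun b hb => ?_⟩
        have h1 := hG a ha b hb
        have h2 := hG b hb a ha
        have := hlt b hb
        simp only [Finset.mem_insert, Finset.mem_singleton, Fin.ext_iff]
        omega
      · push Not at hG'
        refine ⟨_, Or.inr ⟨q, hqU, rfl⟩, fun b hb => ?_⟩
        rw [hG' b hb]
        simp
  · have : ∀ a b : Fin n, a.val ≠ b.val → ({a, b} : Finset (Fin n)).card = [0, 1].length := by
      intro a b hab
      rw [Finset.card_pair fun h => hab (congrArg _ h)]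
      rfl
    rintro F (rfl | ⟨a, ha, rfl⟩)
    · exact this _ _ (by omega)
    · rw [hstar a ha]
      rw [hU] at ha
      exact this _ _ (by omega)
  · refine WReg_SR_insert {l} (by simp) ?_ ?_ (WReg_pair c _ _ (hc0 _ (by omega))
      (hc1 _ (by omega))) (WReg_star _ _ _ ?_ ?_)
    · rintro G ⟨a, ha, rfl⟩
      rw [hU] at ha
      simp only [Finset.singleton_subset_iff, Finset.mem_insert, Finset.mem_singleton,
        Fin.ext_iff]
      omega
    · intro s hs hT
      refine ⟨_, ⟨q, hqU, rfl⟩, fun x hx => ?_⟩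
      have h1 := hs hx
      simp only [Finset.mem_insert, Finset.mem_singleton] at h1 ⊢
      refine Or.inl (h1.resolve_left ?_)
      rintro rfl
      exact hT (by simpa using hx)
    · intro a ha
      rw [hU] at ha
      simp only [Finset.mem_singleton, Fin.ext_iff]
      omega
    · intro a ha
      rw [hstar a ha]
      rw [hU] at ha
      exact WReg_pair c _ _ (hc0 _ (by omega)) (hc1 _ (by omega))

end CMDimTwo

/-- A lexsegment edge ideal `I = (L(u,v))` with `x_1 ∣ u`
(i.e. `u = x_1 x_i`) and `u ≠ v` is Cohen–Macaulay (`depth(S/I) = dim(S/I)`)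
iff (i) `I = I_{n,2}`, or (ii) `n ≥ 4`, `u = x_1 x_n` and
`v ∈ {x_2 x_3, x_{n-2} x_{n-1}, x_{n-2} x_n}`, or (iii) `n ≥ 3`,
`u = x_1 x_{n-1}` and `v = x_{n-2} x_{n-1}`. -/
theorem lexSegIdeal_CM_iff (K : Type) [Field K] (n i j k : ℕ)
    (hi2 : 2 ≤ i) (hin : i ≤ n) (hj : 1 ≤ j) (hjk : j < k) (hkn : k ≤ n)
    (huv : lexGT (1, i) (j, k)) :
    ((smDepth K n (lexSegIdeal K n (1, i) (j, k)) : WithBot (WithTop ℕ)) =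
        ringKrullDim (MvPolynomial (Fin n) K ⧸ lexSegIdeal K n (1, i) (j, k)))
      ↔ (lexSegIdeal K n (1, i) (j, k) =
            Ideal.span ((fun w : ℕ × ℕ => xv K n w.1 * xv K n w.2) '' {w | validPair n w})
          ∨ (4 ≤ n ∧ i = n ∧
              ((j, k) = (2, 3) ∨ (j, k) = (n - 2, n - 1) ∨ (j, k) = (n - 2, n)))
          ∨ (3 ≤ n ∧ i = n - 1 ∧ (j, k) = (n - 2, n - 1))) := by
  have hW : ∀ w ∈ lexSegSet n (1, i) (j, k), validPair n w := fun w hw => hw.1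
  have huv' : 1 < j ∨ (1 = j ∧ i < k) := huv
  rw [lexSegIdeal, span_eq_SR _ hW]
  constructor
  · intro hCM
    by_contra! hcon
    obtain ⟨hc1, hc2, hc3⟩ := hcon
    refine not_CM_numeric hi2 hin hj hjk hkn huv' ?_ ?_ ?_ hCM
    · rintro ⟨rfl, hjn⟩
      refine hc1 ?_
      rw [← span_eq_SR _ hW]
      congr 2
      ext ⟨a, b⟩
      simp only [lexSegSet, lexGE, validPair, Set.mem_ofPred_eq]
      omega
    · rintro ⟨h4, rfl, h | h⟩
      · exact (hc2 h4 rfl).1 (Prod.ext h.1 h.2)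
      · rcases h with ⟨h, h' | h'⟩
        · exact (hc2 h4 rfl).2.1 (Prod.ext (by simp only; omega) (by simp only; omega))
        · exact (hc2 h4 rfl).2.2 (Prod.ext (by simp only; omega) (by simp only; omega))
    · rintro ⟨h, ha, hb, hc⟩
      exact hc3 h (by omega) (Prod.ext (by simp only; omega) (by simp only; omega))
  · rintro (h | ⟨h4, rfl, h | h | h⟩ | ⟨h3, rfl, h⟩)
    · rw [h, span_eq_SR {w | validPair n w} fun w hw => hw]
      exact CM_complete (by omega)
    · rw [h]
      exact CM_two_three h4
    · rw [h]
      exact CM_dim_two_a h4 (Or.inl rfl)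
    · rw [h]
      exact CM_dim_two_b h4
    · have h' := Prod.ext_iff.mp h
      simp only at h'
      rw [h]
      exact CM_dim_two_a (by omega) (Or.inr (by omega))
end
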